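/- arXiv:2403.15844 — 2 statements merged into one kernel-verified Lean document; each statement's English description precedes it below -/
import Mathlib

section
/- Let B be a standard graded polynomial ring over a field K and let I ⊆ B be a graded ideal of linear type with μ(I) = ht(I) + 1 = n + 1 and pd_B(B/I) = n (e.g., I perfect). Then the Rees algebra R(I) is Cohen-Macaulay. -/
open Ideal

/-- A (proper) regular sequence. -/
def IsRegSeq {A : Type*} [CommRing A] {n : ℕ} (f : Fin n → A) : Prop :=
  (∀ i : Fin n, ∀ a : A, a * f i ∈ Ideal.span (f '' {j | j < i}) →
      a ∈ Ideal.span (f '' {j | j < i}))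
  ∧ Ideal.span (Set.range f) ≠ ⊤

/-- The element `f·X ∈ R(I)` for `f ∈ I`. -/
noncomputable def fX {B : Type*} [CommRing B] (I : Ideal B) (g : B) (hg : g ∈ I) :
    reesAlgebra I :=
  ⟨Polynomial.C g * Polynomial.X, by
    rw [mem_reesAlgebra_iff]
    intro i
    rcases eq_or_ne i 1 with h | h
    · subst h; simpa using hg
    · simp [Polynomial.coeff_C_mul, Polynomial.coeff_X, h, Ne.symm h]⟩

/-- The presentation `S = B[y_0,…,y_n] → R(I)`, `y_j ↦ f_j X`. -/
noncomputable def reesStructureMap {B : Type*} [CommRing B] {n : ℕ} (I : Ideal B)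
    (f : Fin (n + 1) → B) (hf : ∀ j, f j ∈ I) :
    MvPolynomial (Fin (n + 1)) B →ₐ[B] reesAlgebra I :=
  MvPolynomial.aeval (fun j => fX I (f j) (hf j))

/-- The `S`-module structure on `R(I)` induced by the presentation. -/
noncomputable def reesModule {B : Type*} [CommRing B] {n : ℕ} (I : Ideal B)
    (f : Fin (n + 1) → B) (hf : ∀ j, f j ∈ I) :
    Module (MvPolynomial (Fin (n + 1)) B) (reesAlgebra I) :=
  Module.compHom _ (reesStructureMap I f hf).toRingHom

/-- `p ∈ S` is linear in the `y`-variables. -/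
def YLinear {B : Type*} [CommRing B] {n : ℕ} (p : MvPolynomial (Fin (n + 1)) B) : Prop :=
  ∀ w : Fin (n + 1) →₀ ℕ, MvPolynomial.coeff w p ≠ 0 → (∑ j, w j) ≤ 1

/-- `I` is of linear type (with respect to the presentation `φ` coming from the chosen
generators): the defining ideal of the Rees algebra is generated by elements that are
linear in the second set of variables. -/
def IsLinearTypePres {B : Type*} [CommRing B] {n : ℕ} {I : Ideal B}
    (φ : MvPolynomial (Fin (n + 1)) B →ₐ[B] reesAlgebra I) : Prop :=
  ∃ G : Set (MvPolynomial (Fin (n + 1)) B),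
    (∀ p ∈ G, YLinear p) ∧ RingHom.ker φ.toRingHom = Ideal.span G

/-- A free resolution of `M` over `A`. -/
structure FreeRes (A : Type*) [CommRing A] (M : Type*) [AddCommGroup M] [Module A M] where
  ι : ℕ → Type
  d : ∀ i, (ι (i + 1) →₀ A) →ₗ[A] (ι i →₀ A)
  ε : (ι 0 →₀ A) →ₗ[A] M
  exact_d : ∀ i, Function.Exact (d (i + 1)) (d i)
  exact_ε : Function.Exact (d 0) ε
  surj : Function.Surjective ε

/-- Projective dimension, as the least length of a free resolution. -/
noncomputable def projDim (A : Type*) [CommRing A] (M : Type*) [AddCommGroup M]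
    [Module A M] : ℕ∞ :=
  sInf {e : ℕ∞ | ∃ k : ℕ, e = (k : ℕ∞) ∧
    ∃ R : FreeRes A M, ∀ i : ℕ, k < i → IsEmpty (R.ι i)}

/-- The height of an ideal: the infimum of the heights of primes containing it. -/
noncomputable def idealHeight {A : Type*} [CommRing A] (I : Ideal A) : ℕ∞ :=
  ⨅ (p : PrimeSpectrum A) (_ : I ≤ p.asIdeal), Order.height p

/-- The minimal number of generators of an ideal. -/
noncomputable def minGens {A : Type*} [CommRing A] (I : Ideal A) : ℕ :=
  sInf {k : ℕ | ∃ g : Fin k → A, I = Ideal.span (Set.range g)}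

/-- The depth of a (Noetherian) ring along an ideal `P`: the supremum of lengths of
regular sequences contained in `P`. -/
noncomputable def depthAt {R : Type*} [CommRing R] (P : Ideal R) : ℕ∞ :=
  sSup {e : ℕ∞ | ∃ (k : ℕ) (g : Fin k → R), e = (k : ℕ∞) ∧ (∀ i, g i ∈ P) ∧ IsRegSeq g}

/-- A commutative ring is Cohen–Macaulay if for every maximal ideal the depth along it
equals its height. -/
def IsCMRing (R : Type*) [CommRing R] : Prop :=
  ∀ P : Ideal R, P.IsMaximal → depthAt P = idealHeight P

/-!
Since `B` is Cohen–Macaulay and `ht I ≥ n`, prime avoidance gives generators `b, a₁, …, aₙ` of `I`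
with `a₁, …, aₙ` a regular sequence. Put `J = (a₁, …, aₙ)`, so that `R(I) = R(J)[bt] ⊆ B[t]` is the
image of `R(J)[y]` under `y ↦ bt`. As `I` is of linear type, the kernel of this map is
`(y - bt) 𝔠 R(J)[y]` with `𝔠 = J : b`, which is isomorphic to `𝔠 R(J)[y]` as a module. Now
`R(J)/𝔠R(J)` is a polynomial ring in `n` variables over `B/𝔠`, and the exact sequence
`0 → B/𝔠 → B/J → B/I → 0` together with `pd B/I ≤ n` bounds the depth of `B/𝔠` below by `dim B - n`.
Hence `depth R(I) ≥ dim B + 1` as soon as `depth R(J) ≥ dim B + 1`, and the latter follows by adding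
the `aᵢ` one at a time, with `𝔠 = (a₁, …, aᵢ)` at each step.
-/

universe u

section Ext

open CategoryTheory CategoryTheory.Abelian

variable {C : Type*} [Category C] [Abelian C] [HasExt C] {T : ShortComplex C}

lemma subsingleton_ext_X₁_zero (hT : T.ShortExact) {X : C} (h₂ : Subsingleton (Ext X T.X₂ 0)) :
    Subsingleton (Ext X T.X₁ 0) :=
  have := hT.mono_f
  ⟨fun _ _ ↦ Ext.postcomp_mk₀_injective_of_mono X T.f (h₂.elim _ _)⟩

lemma subsingleton_ext_X₁_succ (hT : T.ShortExact) {X : C} {i : ℕ}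
    (h₂ : Subsingleton (Ext X T.X₂ (i + 1))) (h₃ : Subsingleton (Ext X T.X₃ i)) :
    Subsingleton (Ext X T.X₁ (i + 1)) := by
  refine subsingleton_of_forall_eq 0 fun a ↦ ?_
  obtain ⟨b, rfl⟩ := Ext.covariant_sequence_exact₁ X hT a (Subsingleton.elim _ _) rfl
  rw [Subsingleton.elim b 0, Ext.zero_comp]

lemma subsingleton_ext_X₂ (hT : T.ShortExact) {X : C} {i : ℕ}
    (h₁ : Subsingleton (Ext X T.X₁ i)) (h₃ : Subsingleton (Ext X T.X₃ i)) :
    Subsingleton (Ext X T.X₂ i) := by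
  refine subsingleton_of_forall_eq 0 fun a ↦ ?_
  obtain ⟨b, rfl⟩ := Ext.covariant_sequence_exact₂ X hT a (Subsingleton.elim _ _)
  rw [Subsingleton.elim b 0, Ext.zero_comp]

lemma subsingleton_ext_X₃ (hT : T.ShortExact) {X : C} {i : ℕ}
    (h₁ : Subsingleton (Ext X T.X₁ (i + 1))) (h₂ : Subsingleton (Ext X T.X₂ i)) :
    Subsingleton (Ext X T.X₃ i) := by
  refine subsingleton_of_forall_eq 0 fun a ↦ ?_
  obtain ⟨b, rfl⟩ := Ext.covariant_sequence_exact₃ X hT a rfl (Subsingleton.elim _ _)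
  rw [Subsingleton.elim b 0, Ext.zero_comp]

lemma subsingleton_ext_of_isZero_right {X Y : C} (hY : Limits.IsZero Y) (i : ℕ) :
    Subsingleton (Ext X Y i) := by
  refine subsingleton_of_forall_eq 0 fun a ↦ ?_
  rw [← Ext.comp_mk₀_id a, hY.eq_of_src (𝟙 Y) 0, Ext.mk₀_zero, Ext.comp_zero]

end Ext

section Depth

open CategoryTheory CategoryTheory.Abelian RingTheory.Sequence

variable {S : Type u} [CommRing S] {M M' M'' : Type u} [AddCommGroup M] [Module S M]
  [AddCommGroup M'] [Module S M'] [AddCommGroup M''] [Module S M''] {P : Ideal S} {d e : ℕ}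

/-- The homological form of the inequality `depth_P M ≥ d` between the grade of an ideal `P` on
a module `M` and a natural number: `Ext^i(S/P, M) = 0` for all `i < d`. -/
def DepthGE (P : Ideal S) (d : ℕ) (M : Type u) [AddCommGroup M] [Module S M] : Prop :=
  ∀ i < d, Subsingleton (Ext (ModuleCat.of S (S ⧸ P)) (ModuleCat.of S M) i)

lemma smul_quotient_eq_zero_of_mem {x : S} (hx : x ∈ P) (y : S ⧸ P) : x • y = 0 := by
  obtain ⟨y, rfl⟩ := Ideal.Quotient.mk_surjective y
  rw [Algebra.smul_def, Ideal.Quotient.algebraMap_eq, Ideal.Quotient.eq_zero_iff_mem.2 hx, zero_mul]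

lemma subsingleton_ext_zero_iff_linearMap {N : Type u} [AddCommGroup N] [Module S N] :
    Subsingleton (Ext (ModuleCat.of S N) (ModuleCat.of S M) 0) ↔ Subsingleton (N →ₗ[S] M) :=
  (Ext.addEquiv₀.trans ModuleCat.homAddEquiv).toEquiv.subsingleton_congr

lemma ext_smul_eq_zero {N : Type u} [AddCommGroup N] [Module S N] {x : S}
    (hx : ∀ y : N, x • y = 0) {i : ℕ} (a : Ext (ModuleCat.of S N) (ModuleCat.of S M) i) :
    x • a = 0 := by
  have hid : x • 𝟙 (ModuleCat.of S N) = 0 := by ext y; exact hx y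
  rw [← Ext.mk₀_id_comp a, ← Ext.smul_comp, ← Ext.mk₀_smul, hid, Ext.mk₀_zero, Ext.zero_comp]

namespace DepthGE

lemma mono (h : DepthGE P d M) (he : e ≤ d) : DepthGE P e M :=
  fun i hi ↦ h i (hi.trans_le he)

lemma of_subsingleton [Subsingleton M] : DepthGE P d M :=
  fun i _ ↦ subsingleton_ext_of_isZero_right (ModuleCat.isZero_of_subsingleton _) i

section Exact

variable {f : M' →ₗ[S] M} {g : M →ₗ[S] M''}

lemma shortExact (hfg : Function.Exact f g) (hf : Function.Injective f)
    (hg : Function.Surjective g) :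
    (ModuleCat.shortComplexOfCompEqZero f g hfg.linearMap_comp_eq_zero).ShortExact :=
  ModuleCat.shortComplex_shortExact _ hfg hf hg

lemma left (hfg : Function.Exact f g) (hf : Function.Injective f) (hg : Function.Surjective g)
    (h : DepthGE P d M) (h'' : DepthGE P e M'') (hde : d ≤ e + 1) : DepthGE P d M' := by
  have hT := shortExact hfg hf hg
  rintro (_ | i) hi
  · have := h 0 hi
    exact subsingleton_ext_X₁_zero hT (h 0 hi)
  · exact subsingleton_ext_X₁_succ hT (h _ hi) (h'' _ (by lia))

lemma right (hfg : Function.Exact f g) (hf : Function.Injective f) (hg : Function.Surjective g)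
    (h : DepthGE P d M) (h' : DepthGE P (d + 1) M') : DepthGE P d M'' :=
  fun i hi ↦ subsingleton_ext_X₃ (shortExact hfg hf hg) (h' _ (by lia)) (h _ hi)

end Exact

lemma congr (φ : M ≃ₗ[S] M') (h : DepthGE P d M) : DepthGE P d M' :=
  fun i hi ↦ subsingleton_ext_X₂
    (shortExact (M'' := PUnit) (g := 0) (fun y ↦ ⟨fun _ ↦ ⟨φ.symm y, by simp⟩, fun _ ↦ rfl⟩)
      φ.injective fun _ ↦ ⟨0, rfl⟩)
    (h i hi) (subsingleton_ext_of_isZero_right (ModuleCat.isZero_of_subsingleton _) i)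

lemma of_quotSMulTop {x : S} (hxP : x ∈ P) (hx : IsSMulRegular M x)
    (h : DepthGE P d (QuotSMulTop x M)) : DepthGE P (d + 1) M := by
  have hT := IsSMulRegular.smulShortComplex_shortExact (M := ModuleCat.of S M) hx
  have hP : ∀ y : S ⧸ P, x • y = 0 := smul_quotient_eq_zero_of_mem hxP
  rintro (_ | i) hi
  · refine subsingleton_ext_zero_iff_linearMap.2 (subsingleton_of_forall_eq 0 fun f ↦ ?_)
    exact LinearMap.ext fun y ↦ hx (by simp [← map_smul, hP])
  · refine subsingleton_of_forall_eq 0 fun a ↦ ?_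
    have hxa : a.comp (Ext.mk₀ (x • 𝟙 (ModuleCat.of S M))) (add_zero _) = 0 := by
      rw [Ext.mk₀_smul, Ext.comp_smul, Ext.comp_mk₀_id, ext_smul_eq_zero hP]
    obtain ⟨b, rfl⟩ := Ext.covariant_sequence_exact₁ _ hT a hxa rfl
    have hb : b = 0 := (h i (by lia)).elim b 0
    rw [hb, Ext.zero_comp]
    rfl

lemma quotSMulTop {x : S} (hx : IsSMulRegular M x) (h : DepthGE P (d + 1) M) :
    DepthGE P d (QuotSMulTop x M) :=
  fun i hi ↦ subsingleton_ext_X₃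
    (IsSMulRegular.smulShortComplex_shortExact (M := ModuleCat.of S M) hx)
    (h _ (by lia)) (h _ (by lia))

lemma of_isWeaklyRegular {rs : List S} (hP : ∀ r ∈ rs, r ∈ P) (h : IsWeaklyRegular M rs) :
    DepthGE P rs.length M := by
  induction rs generalizing M with
  | nil => exact fun i hi ↦ absurd hi (Nat.not_lt_zero i)
  | cons r rs ih =>
    obtain ⟨hr, hrs⟩ := (isWeaklyRegular_cons_iff M r rs).1 h
    obtain ⟨hrP, hrsP⟩ := List.forall_mem_cons.1 hP
    exact of_quotSMulTop hrP hr (ih hrsP hrs)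

lemma exists_isWeaklyRegular [IsNoetherianRing S] [Module.Finite S M] (h : DepthGE P d M) :
    ∃ rs : List S, rs.length = d ∧ (∀ r ∈ rs, r ∈ P) ∧ IsWeaklyRegular M rs := by
  induction d generalizing M with
  | zero => exact ⟨[], rfl, by simp, .nil S M⟩
  | succ d ih =>
    have hHom := subsingleton_ext_zero_iff_linearMap.1 (h 0 d.succ_pos)
    obtain ⟨r, hrP, hr⟩ := IsSMulRegular.subsingleton_linearMap_iff.1 hHom
    rw [Ideal.annihilator_quotient] at hrP
    obtain ⟨rs, rfl, hrsP, hrs⟩ := ih (h.quotSMulTop hr)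
    exact ⟨r :: rs, rfl, List.forall_mem_cons.2 ⟨hrP, hrsP⟩, hrs.cons hr⟩

end DepthGE

end Depth

section UniformDepth

open RingTheory.Sequence
open scoped Pointwise

/-- Every maximal ideal of `R` contains a weakly regular sequence of length `d`. For a Noetherian
ring this says that all localizations at maximal ideals have depth at least `d`. -/
def UniformDepthGE (R : Type*) [CommRing R] (d : ℕ) : Prop :=
  ∀ P : Ideal R, P.IsMaximal →
    ∃ rs : List R, rs.length = d ∧ (∀ r ∈ rs, r ∈ P) ∧ IsWeaklyRegular R rs

lemma DepthGE.of_flat {S : Type u} [CommRing S] {M : Type u} [AddCommGroup M] [Module S M]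
    [Module.Flat S M] {d : ℕ} (h : UniformDepthGE S d) {P : Ideal S} (hP : P.IsMaximal) :
    DepthGE P d M := by
  obtain ⟨rs, rfl, hrsP, hrs⟩ := h P hP
  exact .of_isWeaklyRegular hrsP
    (((TensorProduct.rid S M).isWeaklyRegular_congr rs).1 hrs.isWeaklyRegular_lTensor)

lemma isWeaklyRegular_replicate_one {S M : Type*} [CommRing S] [AddCommGroup M] [Module S M]
    (d : ℕ) : IsWeaklyRegular M (List.replicate d (1 : S)) := by
  induction d generalizing M with
  | zero => exact .nil S M
  | succ d ih => exact .cons (.one M) ih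

namespace UniformDepthGE

lemma zero (R : Type*) [CommRing R] : UniformDepthGE R 0 :=
  fun _ _ ↦ ⟨[], rfl, by simp, .nil R R⟩

lemma congr {R R' : Type*} [CommRing R] [CommRing R'] (e : R ≃+* R') {d : ℕ}
    (h : UniformDepthGE R d) : UniformDepthGE R' d := by
  intro P hP
  obtain ⟨rs, rfl, hrsP, hrs⟩ :=
    h (P.comap e.toRingHom) (Ideal.comap_isMaximal_of_surjective _ e.surjective)
  refine ⟨rs.map e, List.length_map _, List.forall_mem_map.2 hrsP, ?_⟩
  refine (AddEquiv.isWeaklyRegular_congr (e := e.toAddEquiv) ?_).1 hrs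
  exact List.forall₂_map_right_iff.2 <| List.forall₂_same.2 fun r _ x ↦ by simp

section Surjective

variable {S A : Type u} [CommRing S] [CommRing A] [Algebra S A] {d : ℕ}

lemma of_depthGE [IsNoetherianRing S] (hSA : Function.Surjective (algebraMap S A))
    (h : ∀ P : Ideal S, P.IsMaximal → DepthGE P d A) : UniformDepthGE A d := by
  intro P hP
  have := Module.Finite.of_surjective (Algebra.linearMap S A) hSA
  have hcomap := Ideal.comap_isMaximal_of_surjective (K := P) (algebraMap S A) hSA
  obtain ⟨rs, rfl, hrsP, hrs⟩ := (h _ hcomap).exists_isWeaklyRegular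
  exact ⟨rs.map (algebraMap S A), List.length_map _, List.forall_mem_map.2 hrsP,
    (isWeaklyRegular_map_algebraMap_iff A A rs).2 hrs⟩

lemma depthGE (hSA : Function.Surjective (algebraMap S A)) (h : UniformDepthGE A d)
    {P : Ideal S} (hP : P.IsMaximal) : DepthGE P d A := by
  obtain ⟨rs, rfl, hrsP, hrs⟩ : ∃ rs : List A, rs.length = d ∧
      (∀ r ∈ rs, r ∈ P.map (algebraMap S A)) ∧ IsWeaklyRegular A rs := by
    obtain htop | hmax := Ideal.map_eq_top_or_isMaximal_of_surjective _ hSA hP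
    · simp only [htop, Submodule.mem_top, implies_true, true_and]
      exact ⟨List.replicate d 1, List.length_replicate, isWeaklyRegular_replicate_one d⟩
    · exact h _ hmax
  choose! lift hliftP hlift using fun r hr ↦ (Ideal.mem_map_iff_of_surjective _ hSA).1 (hrsP r hr)
  have hmap : (rs.map lift).map (algebraMap S A) = rs := by
    rw [List.map_map]
    exact (List.map_congr_left hlift).trans (List.map_id rs)
  rw [← List.length_map (f := lift)]
  refine .of_isWeaklyRegular (List.forall_mem_map.2 hliftP) ?_
  rwa [← isWeaklyRegular_map_algebraMap_iff A A, hmap]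

lemma mono [IsNoetherianRing S] {e : ℕ} (h : UniformDepthGE S d) (hed : e ≤ d) :
    UniformDepthGE S e :=
  .of_depthGE (S := S) Function.surjective_id fun _ hP ↦
    (h.depthGE (S := S) Function.surjective_id hP).mono hed

end Surjective

lemma polynomial {R : Type*} [CommRing R] [IsJacobsonRing R] {d : ℕ} (h : UniformDepthGE R d) :
    UniformDepthGE (Polynomial R) (d + 1) := by
  intro P hP
  obtain ⟨rs, rfl, hrsP, hrs⟩ := h _ (Polynomial.isMaximal_comap_C_of_isJacobsonRing P)
  obtain ⟨p, hp, hpX⟩ := Polynomial.quotient_mk_comp_C_isIntegral_of_isJacobsonRing P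
    (Ideal.Quotient.mk P Polynomial.X)
  have hpP : p ∈ P := by
    rwa [← Polynomial.hom_eval₂, Polynomial.eval₂_C_X, Ideal.Quotient.eq_zero_iff_mem] at hpX
  refine ⟨p :: rs.map (algebraMap R (Polynomial R)), by simp,
    List.forall_mem_cons.2 ⟨hpP, List.forall_mem_map.2 hrsP⟩, ?_⟩
  refine .cons (fun _ _ hab ↦ hp.isRegular.left hab) ?_
  rw [isWeaklyRegular_map_algebraMap_iff]
  have hpTop : (p • ⊤ : Submodule (Polynomial R) (Polynomial R)) = Ideal.span {p} := by
    rw [← Submodule.ideal_span_singleton_smul, smul_eq_mul, Ideal.mul_top]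
  let e : QuotSMulTop p (Polynomial R) ≃ₗ[R] AdjoinRoot p :=
    (Submodule.quotEquivOfEq _ _ hpTop).restrictScalars R
  have := hp.free_adjoinRoot
  have := Module.Flat.of_linearEquiv e
  exact ((TensorProduct.rid R _).isWeaklyRegular_congr rs).1 hrs.isWeaklyRegular_lTensor

lemma mvPolynomial {R : Type*} [CommRing R] [IsJacobsonRing R] {d : ℕ} (h : UniformDepthGE R d)
    (m : ℕ) : UniformDepthGE (MvPolynomial (Fin m) R) (d + m) := by
  induction m with
  | zero => exact h.congr (MvPolynomial.isEmptyRingEquiv R (Fin 0)).symm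
  | succ m ih => exact ih.polynomial.congr (MvPolynomial.finSuccEquiv R m).symm.toRingEquiv

end UniformDepthGE

end UniformDepth

section FreeResolution

variable {S : Type u} [CommRing S] {M : Type u} [AddCommGroup M] [Module S M] {P : Ideal S}

lemma FreeRes.depthGE_range_d (R : FreeRes S M) {m k : ℕ} (hS : UniformDepthGE S m)
    (hP : P.IsMaximal) (hk : ∀ i, k < i → IsEmpty (R.ι i)) {j i d : ℕ} (hij : k ≤ i + j)
    (hdj : d + j ≤ m + 1) : DepthGE P d (LinearMap.range (R.d i)) := by
  induction j generalizing i d with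
  | zero =>
    have := hk (i + 1) (by lia)
    have := (R.d i).surjective_rangeRestrict.subsingleton
    exact .of_subsingleton
  | succ j ih =>
    have hexact : Function.Exact (LinearMap.range (R.d (i + 1))).subtype (R.d i).rangeRestrict := by
      intro x
      rw [← Subtype.coe_inj]
      exact (R.exact_d i x).trans (by simp)
    exact .right hexact (Submodule.injective_subtype _) (LinearMap.surjective_rangeRestrict _)
      ((DepthGE.of_flat hS hP).mono (by lia)) (ih (by lia) (by lia))

lemma FreeRes.depthGE (R : FreeRes S M) {m k : ℕ} (hS : UniformDepthGE S m) (hP : P.IsMaximal)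
    (hk : ∀ i, k < i → IsEmpty (R.ι i)) : DepthGE P (m - k) M := by
  obtain hmk | hkm := lt_or_ge m k
  · exact fun i hi ↦ by lia
  have hexact : Function.Exact (LinearMap.range (R.d 0)).subtype R.ε :=
    fun x ↦ (R.exact_ε x).trans (by simp)
  exact .right hexact (Submodule.injective_subtype _) R.surj
    ((DepthGE.of_flat hS hP).mono (by lia))
    (R.depthGE_range_d hS hP hk (zero_add k).ge (by lia))

lemma exists_freeRes_of_projDim_le {n : ℕ} (h : projDim S M ≤ n) :
    ∃ k ≤ n, ∃ R : FreeRes S M, ∀ i, k < i → IsEmpty (R.ι i) := by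
  have hlt : projDim S M < (n + 1 : ℕ) := h.trans_lt (by exact_mod_cast n.lt_succ_self)
  obtain ⟨_, ⟨k, rfl, hR⟩, hk⟩ := sInf_lt_iff.1 hlt
  exact ⟨k, Nat.lt_succ_iff.1 (by exact_mod_cast hk), hR⟩

lemma depthGE_of_projDim_le {m n : ℕ} (hS : UniformDepthGE S m) (hP : P.IsMaximal)
    (h : projDim S M ≤ n) : DepthGE P (m - n) M := by
  obtain ⟨k, hk, R, hR⟩ := exists_freeRes_of_projDim_le h
  exact (R.depthGE hS hP hR).mono (by lia)

end FreeResolution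

section Unmixed

open RingTheory.Sequence
open scoped Pointwise

variable {R M : Type*} [CommRing R] [AddCommGroup M] [Module R M]

lemma quotSMulTop_map_subtype_injective {N : Submodule R M} {x : R}
    (h : IsSMulRegular (M ⧸ N) x) : Function.Injective (QuotSMulTop.map x N.subtype) := by
  have hexact := QuotSMulTop.map_first_exact_on_four_term_exact_of_isSMulRegular_last
    ((LinearMap.exact_zero_iff_injective N N.subtype).2 N.injective_subtype)
    (LinearMap.exact_subtype_mkQ N) h
  rw [injective_iff_map_eq_zero]
  intro y hy
  obtain ⟨z, rfl⟩ := (hexact y).1 hy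
  obtain ⟨z, rfl⟩ := Submodule.mkQ_surjective _ z
  simp

lemma isSMulRegular_quotient_torsionBySet {x : R} (hx : IsSMulRegular M x) (s : Set R) :
    IsSMulRegular (M ⧸ Submodule.torsionBySet R M s) x := by
  rw [isSMulRegular_quotient_iff_mem_of_smul_mem]
  intro y hy
  rw [Submodule.mem_torsionBySet_iff] at hy ⊢
  exact fun a ↦ hx.right_eq_zero_of_smul (by rw [smul_comm, hy])

lemma mem_support_torsionBySet_of_mem_associatedPrimes [IsNoetherianRing R] {p : PrimeSpectrum R}
    (hp : p.asIdeal ∈ associatedPrimes R M) :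
    p ∈ Module.support R (Submodule.torsionBySet R M (p.asIdeal : Set R)) := by
  obtain ⟨-, y, hy⟩ := isAssociatedPrime_iff.1 hp
  have hyp : ∀ a, a ∈ p.asIdeal ↔ a • y = 0 := by simp [hy, Submodule.mem_colon_singleton]
  have hyN : y ∈ Submodule.torsionBySet R M (p.asIdeal : Set R) :=
    (Submodule.mem_torsionBySet_iff _ _).2 fun a ↦ (hyp a).1 a.2
  refine Module.mem_support_iff_exists_annihilator.2 ⟨⟨y, hyN⟩, fun a ha ↦ (hyp a).2 ?_⟩
  exact congrArg Subtype.val ((Submodule.mem_annihilator_span_singleton _ _).1 ha)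

-- The torsion submodule `N = {y | p y = 0}` satisfies `N ∩ x M = x N`, hence `N / x N` embeds
-- into `M / x M`; its support contains `P` by Nakayama.
lemma exists_lt_mem_associatedPrimes_quotSMulTop [IsNoetherianRing R] [Module.Finite R M]
    {p P : PrimeSpectrum R} (hp : p.asIdeal ∈ associatedPrimes R M) (hpP : p ≤ P) {x : R}
    (hxP : x ∈ P.asIdeal) (hx : IsSMulRegular M x) :
    ∃ q : PrimeSpectrum R, q.asIdeal ∈ associatedPrimes R (QuotSMulTop x M) ∧ p < q ∧ q ≤ P := by
  let N := Submodule.torsionBySet R M (p.asIdeal : Set R)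
  have hPsupp : P ∈ Module.support R (QuotSMulTop x N) := by
    rw [Module.support_quotSMulTop]
    exact ⟨Module.mem_support_mono hpP (mem_support_torsionBySet_of_mem_associatedPrimes hp),
      by simpa using hxP⟩
  obtain ⟨q, hq, hqP⟩ := Ideal.exists_minimalPrimes_le (Module.annihilator_le_of_mem_support hPsupp)
  have hpann : p.asIdeal ≤ Module.annihilator R (QuotSMulTop x N) := by
    intro a ha
    rw [Module.mem_annihilator]
    intro y
    obtain ⟨y, rfl⟩ := Submodule.mkQ_surjective _ y
    have hay : a • y = 0 := Subtype.ext ((Submodule.mem_torsionBySet_iff _ _).1 y.2 ⟨a, ha⟩)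
    rw [← map_smul, hay, map_zero]
  have hxp : x ∉ p.asIdeal := by
    intro hxp
    have : x ∈ {r : R | IsSMulRegular M r}ᶜ := by
      rw [← biUnion_associatedPrimes_eq_compl_regular]
      exact Set.mem_biUnion hp hxp
    exact this hx
  refine ⟨⟨q, hq.isPrime⟩, ?_, lt_of_le_not_ge (hpann.trans hq.1.2) fun hqp ↦ ?_, hqP⟩
  · exact associatedPrimes.subset_of_injective
      (quotSMulTop_map_subtype_injective (isSMulRegular_quotient_torsionBySet hx _))
      (Module.associatedPrimes.minimalPrimes_annihilator_subset_associatedPrimes R _ hq)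
  · exact hxp (hqp (hq.1.2 (QuotSMulTop.mem_annihilator _ x)))

theorem length_le_coheight_of_mem_associatedPrimes [IsNoetherianRing R] [Module.Finite R M]
    {p P : PrimeSpectrum R} (hp : p.asIdeal ∈ associatedPrimes R M) (hpP : p ≤ P) {rs : List R}
    (hrsP : ∀ r ∈ rs, r ∈ P.asIdeal) (hrs : IsWeaklyRegular M rs) :
    (rs.length : ℕ∞) ≤ Order.coheight p := by
  induction rs generalizing M p with
  | nil => simp
  | cons x rs ih =>
    obtain ⟨hx, hrs⟩ := (isWeaklyRegular_cons_iff M x rs).1 hrs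
    obtain ⟨hxP, hrsP⟩ := List.forall_mem_cons.1 hrsP
    obtain ⟨q, hq, hpq, hqP⟩ := exists_lt_mem_associatedPrimes_quotSMulTop hp hpP hxP hx
    calc ((x :: rs).length : ℕ∞) = rs.length + 1 := by simp
      _ ≤ Order.coheight q + 1 := by gcongr; exact ih hq hqP hrsP hrs
      _ ≤ Order.coheight p := Order.coheight_add_one_le hpq

end Unmixed

section RevWeaklyRegular

lemma exists_mem_forall_add_notMem {R : Type*} [CommRing R] {s : Finset (Ideal R)}
    (hs : ∀ p ∈ s, p.IsPrime) {x : R} {J : Ideal R} (h : ∀ p ∈ s, x ∈ p → ¬ J ≤ p) :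
    ∃ c ∈ J, ∀ p ∈ s, x + c ∉ p := by
  classical
  induction s using Finset.strongInduction with
  | H s ih =>
  obtain rfl | hne := s.eq_empty_or_nonempty
  · exact ⟨0, J.zero_mem, by simp⟩
  obtain ⟨q, hq, hmin⟩ := s.exists_minimal hne
  obtain ⟨c, hcJ, hc⟩ := ih (s.erase q) (Finset.erase_ssubset hq)
    (fun p hp ↦ hs p (Finset.mem_of_mem_erase hp)) (fun p hp ↦ h p (Finset.mem_of_mem_erase hp))
  by_cases hxq : x + c ∈ q
  swap
  · refine ⟨c, hcJ, fun p hp ↦ ?_⟩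
    obtain rfl | hpq := eq_or_ne p q
    exacts [hxq, hc p (Finset.mem_erase.2 ⟨hpq, hp⟩)]
  have hJq : ¬ J ≤ q := fun hJq ↦ h q hq (by simpa using q.sub_mem hxq (hJq hcJ)) hJq
  have hprod : ¬ J * ∏ p ∈ s.erase q, p ≤ q := by
    have hqprime := hs q hq
    rw [hqprime.mul_le, hqprime.prod_le]
    rintro (hJ | ⟨p, hp, hpq⟩)
    · exact hJq hJ
    · exact Finset.ne_of_mem_erase hp (hpq.antisymm (hmin (Finset.mem_of_mem_erase hp) hpq))
  obtain ⟨d, hd, hdq⟩ := SetLike.not_le_iff_exists.1 hprod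
  refine ⟨c + d, J.add_mem hcJ (Ideal.mul_le_left hd), fun p hp hmem ↦ ?_⟩
  rw [← add_assoc] at hmem
  obtain rfl | hpq := eq_or_ne p q
  · exact hdq ((p.add_mem_iff_right hxq).1 hmem)
  · have hp' : p ∈ s.erase q := Finset.mem_erase.2 ⟨hpq, hp⟩
    have hdp : d ∈ p := (prod_le_inf.trans (Finset.inf_le (f := id) hp')) (Ideal.mul_le_right hd)
    exact hc p hp' ((p.add_mem_iff_left hdp).1 hmem)

variable {B : Type u} [CommRing B]

/-- A tuple is *reverse weakly regular* if each entry is a nonzerodivisor modulo the ideal spanned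
by the later entries. The order is reversed, compared with `RingTheory.Sequence.IsWeaklyRegular`,
because `Fin.cons` and `MvPolynomial.finSuccEquiv` extend tuples at the front. -/
inductive IsRevWeaklyRegular : ∀ {k : ℕ}, (Fin k → B) → Prop
  | nil (a : Fin 0 → B) : IsRevWeaklyRegular a
  | cons {k : ℕ} {a : Fin k → B} {b : B} (ha : IsRevWeaklyRegular a)
      (hb : IsSMulRegular (B ⧸ span (Set.range a)) b) :
      IsRevWeaklyRegular (Fin.cons b a : Fin (k + 1) → B)

section Colon

variable (J : Ideal B) (b : B)

/-- Multiplication by `b`, as a map `B / (J : b) → B / J`. -/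
def quotientColonMul : (B ⧸ J.colon {b}) →ₗ[B] B ⧸ J :=
  Submodule.mapQ _ _ (LinearMap.mulRight B b) fun _ hx ↦ Submodule.mem_colon_singleton.1 hx

lemma quotientColonMul_mk (x : B) :
    quotientColonMul J b (Submodule.Quotient.mk x) = Submodule.Quotient.mk (x * b) := rfl

lemma quotientColonMul_injective : Function.Injective (quotientColonMul J b) := by
  rw [injective_iff_map_eq_zero]
  intro x hx
  obtain ⟨x, rfl⟩ := Submodule.Quotient.mk_surjective _ x
  rw [quotientColonMul_mk, Submodule.Quotient.mk_eq_zero] at hx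
  exact (Submodule.Quotient.mk_eq_zero _).2 (Submodule.mem_colon_singleton.2 hx)

lemma exact_quotientColonMul_factor : Function.Exact (quotientColonMul J b)
    (Submodule.factor (le_sup_left : J ≤ J ⊔ span {b})) := by
  intro y
  obtain ⟨y, rfl⟩ := Submodule.mkQ_surjective _ y
  rw [Submodule.factor_mk, Submodule.mkQ_apply, Submodule.mkQ_apply, Submodule.Quotient.mk_eq_zero,
    sup_comm, mem_span_singleton_sup]
  constructor
  · rintro ⟨c, j, hj, rfl⟩
    refine ⟨Submodule.Quotient.mk c, ?_⟩
    rw [quotientColonMul_mk, Submodule.Quotient.eq, sub_add_cancel_left]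
    exact J.neg_mem hj
  · rintro ⟨x, hx⟩
    obtain ⟨x, rfl⟩ := Submodule.Quotient.mk_surjective _ x
    rw [quotientColonMul_mk, Submodule.Quotient.eq] at hx
    exact ⟨x, y - x * b, by simpa using J.neg_mem hx, by ring⟩

variable {J b} {P : Ideal B} {d : ℕ}

lemma DepthGE.quotient_colon (h : DepthGE P d (B ⧸ J)) (h' : DepthGE P d (B ⧸ J ⊔ span {b})) :
    DepthGE P d (B ⧸ J.colon {b}) :=
  .left (exact_quotientColonMul_factor J b) (quotientColonMul_injective J b)
    (Submodule.factor_surjective _) h h' d.le_succ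

lemma colon_singleton_eq_of_isSMulRegular (hb : IsSMulRegular (B ⧸ J) b) : J.colon {b} = J := by
  ext x
  rw [Submodule.mem_colon_singleton, smul_eq_mul, mul_comm]
  exact ⟨mem_of_isSMulRegular_quotient_of_smul_mem hb, J.mul_mem_left b⟩

lemma DepthGE.quotient_sup_span_singleton (hb : IsSMulRegular (B ⧸ J) b)
    (h : DepthGE P (d + 1) (B ⧸ J)) : DepthGE P d (B ⧸ J ⊔ span {b}) :=
  .right (exact_quotientColonMul_factor J b) (quotientColonMul_injective J b)
    (Submodule.factor_surjective _) (h.mono d.le_succ)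
    (by rwa [colon_singleton_eq_of_isSMulRegular hb])

end Colon

variable {m n : ℕ}

lemma span_range_cons {k : ℕ} (b : B) (a : Fin k → B) :
    span (Set.range (Fin.cons b a : Fin (k + 1) → B)) = span (Set.range a) ⊔ span {b} := by
  rw [Fin.range_cons, span_insert, sup_comm]

lemma IsRevWeaklyRegular.depthGE {k : ℕ} {a : Fin k → B} (ha : IsRevWeaklyRegular a)
    (hB : UniformDepthGE B m) {P : Ideal B} (hP : P.IsMaximal) :
    DepthGE P (m - k) (B ⧸ span (Set.range a)) := by
  induction ha with
  | nil a =>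
    refine (DepthGE.of_flat hB hP).congr (Submodule.quotEquivOfEqBot _ ?_).symm
    rw [Set.range_eq_empty, span_empty]
  | @cons k a b _ hb ih =>
    obtain hk | hk := lt_or_ge k m
    · rw [span_range_cons]
      exact .quotient_sup_span_singleton hb (ih.mono (by lia))
    · exact fun i hi ↦ by lia

namespace IsRevWeaklyRegular

variable [IsNoetherianRing B] {k : ℕ} {a : Fin k → B}

-- Depth bounds the coheight of an associated prime `p` of `B / (a)` from below, hence its height
-- from above by `k`.
lemma not_le_of_mem_associatedPrimes (ha : IsRevWeaklyRegular a) (hB : UniformDepthGE B m)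
    (hdim : ringKrullDim B ≤ m) {I : Ideal B} (hk : k < idealHeight I) {p : Ideal B}
    (hp : p ∈ associatedPrimes B (B ⧸ span (Set.range a))) : ¬ I ≤ p := by
  intro hIp
  let q : PrimeSpectrum B := ⟨p, hp.isPrime⟩
  obtain ⟨P, hP, hpP⟩ := p.exists_le_maximal hp.isPrime.ne_top
  have hcoheight : ((m - k : ℕ) : ℕ∞) ≤ Order.coheight q := by
    obtain ⟨rs, hlen, hrsP, hrs⟩ := (ha.depthGE hB hP).exists_isWeaklyRegular
    rw [← hlen]
    exact length_le_coheight_of_mem_associatedPrimes hp (P := ⟨P, hP.isPrime⟩) hpP hrsP hrs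
  have hheight : ((k + 1 : ℕ) : ℕ∞) ≤ Order.height q :=
    (Order.add_one_le_of_lt hk).trans (iInf₂_le q hIp)
  have hsum : Order.height q + Order.coheight q ≤ m := by
    have : Nonempty (PrimeSpectrum B) := ⟨q⟩
    rw [ringKrullDim, Order.krullDim_eq_iSup_height_add_coheight_of_nonempty] at hdim
    exact (le_iSup (fun r : PrimeSpectrum B ↦ Order.height r + Order.coheight r) q).trans
      (WithBot.coe_le_coe.1 hdim)
  have : k + 1 + (m - k) ≤ m := by exact_mod_cast (add_le_add hheight hcoheight).trans hsum
  lia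

lemma exists_cons (ha : IsRevWeaklyRegular a) (hB : UniformDepthGE B m)
    (hdim : ringKrullDim B ≤ m) {b : B} {J : Ideal B}
    (hk : k < idealHeight (span (Set.range a) ⊔ (span {b} ⊔ J))) :
    ∃ c ∈ J, IsRevWeaklyRegular (Fin.cons (b + c) a : Fin (k + 1) → B) := by
  have hfin := associatedPrimes.finite B (B ⧸ span (Set.range a))
  obtain ⟨c, hcJ, hc⟩ := exists_mem_forall_add_notMem (s := hfin.toFinset) (x := b) (J := J)
    (fun p hp ↦ (hfin.mem_toFinset.1 hp).isPrime) (by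
      intro p hp hbp hJp
      rw [hfin.mem_toFinset] at hp
      have hap : span (Set.range a) ≤ p := by
        have hann := hp.annihilator_le
        rwa [Submodule.annihilator_top, annihilator_quotient] at hann
      refine ha.not_le_of_mem_associatedPrimes hB hdim hk hp (sup_le hap (sup_le ?_ hJp))
      rwa [span_singleton_le_iff_mem])
  refine ⟨c, hcJ, ha.cons ?_⟩
  by_contra hreg
  change b + c ∈ {r : B | IsSMulRegular (B ⧸ span (Set.range a)) r}ᶜ at hreg
  rw [← biUnion_associatedPrimes_eq_compl_regular, Set.mem_iUnion₂] at hreg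
  obtain ⟨p, hp, hcp⟩ := hreg
  exact hc p (hfin.mem_toFinset.2 hp) hcp

end IsRevWeaklyRegular

lemma span_singleton_add_sup {b c : B} {J : Ideal B} (hc : c ∈ J) :
    span {b + c} ⊔ J = span {b} ⊔ J := by
  have hJ : span {c} ⊔ J = J := sup_eq_right.2 ((span_singleton_le_iff_mem _).2 hc)
  rw [← hJ, ← sup_assoc, ← sup_assoc, ← span_insert, ← span_insert, span_pair_add_right]

lemma exists_isRevWeaklyRegular_span_sup_span_eq [IsNoetherianRing B] (hB : UniformDepthGE B m)
    (hdim : ringKrullDim B ≤ m) {N : ℕ} (f : Fin N → B)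
    (hf : n ≤ idealHeight (span (Set.range f))) {k l : ℕ} (hkn : k ≤ n) (hkl : k + l = N) :
    ∃ (a : Fin k → B) (c : Fin l → B), IsRevWeaklyRegular a ∧
      span (Set.range a) ⊔ span (Set.range c) = span (Set.range f) := by
  induction k generalizing l with
  | zero =>
    obtain rfl : l = N := by lia
    exact ⟨Fin.elim0, f, .nil _, by simp⟩
  | succ k ih =>
    obtain ⟨a, c, ha, hac⟩ := ih (l := l + 1) (by lia) (by lia)
    have hc : span (Set.range c) = span {c 0} ⊔ span (Set.range (Fin.tail c)) := by
      rw [← Fin.cons_self_tail c, span_range_cons, sup_comm, Fin.cons_zero, Fin.tail_cons]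
    rw [hc] at hac
    obtain ⟨j, hj, hreg⟩ := ha.exists_cons hB hdim (b := c 0) (J := span (Set.range (Fin.tail c)))
      (by rw [hac]; exact lt_of_lt_of_le (by exact_mod_cast hkn) hf)
    refine ⟨_, Fin.tail c, hreg, ?_⟩
    rw [span_range_cons, sup_assoc, span_singleton_add_sup hj, hac]

theorem exists_isRevWeaklyRegular_span_range_cons_eq [IsNoetherianRing B] (hB : UniformDepthGE B m)
    (hdim : ringKrullDim B ≤ m) (f : Fin (n + 1) → B)
    (hf : n ≤ idealHeight (span (Set.range f))) :
    ∃ (a : Fin n → B) (b : B), IsRevWeaklyRegular a ∧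
      span (Set.range (Fin.cons b a : Fin (n + 1) → B)) = span (Set.range f) := by
  obtain ⟨a, c, ha, hac⟩ := exists_isRevWeaklyRegular_span_sup_span_eq hB hdim f hf le_rfl rfl
  refine ⟨a, c 0, ha, ?_⟩
  rwa [span_range_cons, show {c 0} = Set.range c from Set.range_unique.symm]

end RevWeaklyRegular

section InterMul

variable {R : Type u} {D : Type*} [CommRing R] [CommRing D] [Algebra R D]

/-- The ideal `R ∩ e L` of `R`, for an ideal `L` of `R` and an element `e` of an `R`-algebra. -/
def interMul (e : D) (L : Ideal R) : Ideal R :=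
  Submodule.comap (Algebra.linearMap R D)
    (Submodule.map (LinearMap.mulRight R e ∘ₗ Algebra.linearMap R D) L)

lemma mem_interMul {e : D} {L : Ideal R} {x : R} :
    x ∈ interMul e L ↔ ∃ y ∈ L, algebraMap R D y * e = algebraMap R D x := by
  simp [interMul]

variable {e : D} {L : Ideal R} {d : ℕ}

lemma nonempty_linearEquiv_interMul (hinj : Function.Injective (algebraMap R D))
    (he : IsRightRegular e) (heL : ∀ y ∈ L, ∃ x, algebraMap R D x = algebraMap R D y * e) :
    Nonempty (L ≃ₗ[R] interMul e L) := by
  have hmap : Submodule.map (Algebra.linearMap R D) (interMul e L) =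
      Submodule.map (LinearMap.mulRight R e ∘ₗ Algebra.linearMap R D) L := by
    refine Submodule.map_comap_eq_of_le ?_
    rintro _ ⟨y, hy, rfl⟩
    obtain ⟨x, hx⟩ := heL y hy
    exact ⟨x, hx⟩
  exact ⟨(Submodule.equivMapOfInjective _ (he.comp hinj) L).trans <|
    (LinearEquiv.ofEq _ _ hmap.symm).trans (Submodule.equivMapOfInjective _ hinj _).symm⟩

lemma UniformDepthGE.quotient_interMul [IsNoetherianRing R]
    (hinj : Function.Injective (algebraMap R D)) (he : IsRightRegular e)
    (heL : ∀ y ∈ L, ∃ x, algebraMap R D x = algebraMap R D y * e)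
    (hR : UniformDepthGE R (d + 1)) (hL : UniformDepthGE (R ⧸ L) d) :
    UniformDepthGE (R ⧸ interMul e L) d := by
  refine .of_depthGE Ideal.Quotient.mk_surjective fun P hP ↦ ?_
  have hRP : DepthGE P (d + 1) R := .of_flat hR hP
  have hLP : DepthGE P (d + 1) L :=
    .left (LinearMap.exact_subtype_mkQ L) L.injective_subtype L.mkQ_surjective hRP
      (hL.depthGE Ideal.Quotient.mk_surjective hP) le_rfl
  obtain ⟨φ⟩ := nonempty_linearEquiv_interMul hinj he heL
  exact .right (LinearMap.exact_subtype_mkQ _) (Submodule.injective_subtype _)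
    (Submodule.mkQ_surjective _) (hRP.mono d.le_succ) (hLP.congr φ)

end InterMul

section Evaluation

open Polynomial

variable {A : Type u} {D : Type*} [CommRing A] [CommRing D] [Algebra A D] {Λ : Ideal A} {u : D}

section Saturation

variable (hinj : Function.Injective (algebraMap A D))
include hinj

lemma exists_mem_map_C_map_eq {p : D[X]} (hp : ∀ k, p.coeff k ∈ algebraMap A D '' Λ) :
    ∃ h ∈ Λ.map Polynomial.C, h.map (algebraMap A D) = p := by
  obtain ⟨h, rfl⟩ := (lifts_iff_coeff_lifts p).2 fun k ↦ Set.image_subset_range _ _ (hp k)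
  refine ⟨h, mem_map_C_iff.2 fun k ↦ ?_, rfl⟩
  obtain ⟨l, hl, hlk⟩ := hp k
  rw [coe_mapRingHom, coeff_map] at hlk
  rwa [← hinj hlk]

variable (hu : ∀ l ∈ Λ, ∃ z, algebraMap A D z = algebraMap A D l * u) {s w : A} (hs : s ∈ Λ)
  (hw : algebraMap A D w = algebraMap A D s * u) (hreg : ∀ z, w * z ∈ Λ → z ∈ Λ)
include hu hs hw hreg

-- The recursion `pₖ = Fₖ₊₁ + pₖ₊₁ u` for `F = p (X - u)` first shows `pₖ ∈ A`, and then
-- `(s u) pₖ = s pₖ₋₁ - s Fₖ ∈ Λ`.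
lemma coeff_mem_image_of_mul_X_sub_C_mem_lifts {p : D[X]}
    (hp : p * (X - Polynomial.C u) ∈ lifts (algebraMap A D))
    (hsp : ∀ k, algebraMap A D s * p.coeff k ∈ algebraMap A D '' Λ) (k : ℕ) :
    p.coeff k ∈ algebraMap A D '' Λ := by
  obtain ⟨F, hF⟩ := hp
  have hcoeff (j : ℕ) : algebraMap A D (F.coeff (j + 1)) = p.coeff j - p.coeff (j + 1) * u := by
    rw [← coeff_mul_X_sub_C, ← hF, coe_mapRingHom, coeff_map]
  have hcoeff_zero : algebraMap A D (F.coeff 0) = - (p.coeff 0 * u) := by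
    rw [← coeff_map, ← coe_mapRingHom, hF]
    simp [mul_coeff_zero]
  have hstep (j : ℕ) (hj : p.coeff (j + 1) ∈ algebraMap A D '' Λ) :
      p.coeff j ∈ algebraMap A D '' Λ := by
    obtain ⟨l, hl, hlj⟩ := hj
    obtain ⟨z, hz⟩ := hu l hl
    have hy : algebraMap A D (F.coeff (j + 1) + z) = p.coeff j := by
      rw [map_add, hcoeff, hz, hlj, sub_add_cancel]
    refine ⟨_, hreg _ ?_, hy⟩
    obtain _ | j := j
    · have : w * (F.coeff (0 + 1) + z) = - (s * F.coeff 0) := hinj <| by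
        rw [map_mul, hy, hw, map_neg, map_mul, hcoeff_zero]
        ring
      rw [this]
      exact Λ.neg_mem (Λ.mul_mem_right _ hs)
    · obtain ⟨l', hl', hlj'⟩ := hsp j
      have : w * (F.coeff (j + 1 + 1) + z) = l' - s * F.coeff (j + 1) := hinj <| by
        rw [map_mul, hy, hw, map_sub, map_mul, hcoeff, hlj']
        ring
      rw [this]
      exact Λ.sub_mem hl' (Λ.mul_mem_right _ hs)
  have hzero (j : ℕ) (hj : p.natDegree < j) : p.coeff j ∈ algebraMap A D '' Λ :=
    ⟨0, Λ.zero_mem, by rw [coeff_eq_zero_of_natDegree_lt hj, map_zero]⟩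
  obtain hk | hk := lt_or_ge p.natDegree k
  · exact hzero k hk
  · exact Nat.decreasingInduction' (fun j _ _ ↦ hstep j) (hk.trans p.natDegree.le_succ)
      (hzero _ p.natDegree.lt_succ_self)

lemma coeff_mem_image_of_pow_mul_mem {N : ℕ} {p : D[X]}
    (hp : p * (X - Polynomial.C u) ∈ lifts (algebraMap A D))
    (hsp : ∀ k, algebraMap A D s ^ N * p.coeff k ∈ Set.range (algebraMap A D)) (k : ℕ) :
    p.coeff k ∈ algebraMap A D '' Λ := by
  induction N generalizing p k with
  | zero =>
    refine coeff_mem_image_of_mul_X_sub_C_mem_lifts hinj hu hs hw hreg hp (fun j ↦ ?_) k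
    obtain ⟨z, hz⟩ := hsp j
    exact ⟨s * z, Λ.mul_mem_right z hs, by rw [map_mul, hz, pow_zero, one_mul]⟩
  | succ N ih =>
    refine coeff_mem_image_of_mul_X_sub_C_mem_lifts hinj hu hs hw hreg hp (fun j ↦ ?_) k
    rw [← coeff_C_mul]
    refine ih ?_ (fun i ↦ ?_) j
    · rw [mul_assoc]
      exact base_mul_mem_lifts s hp
    · rw [coeff_C_mul, ← mul_assoc, ← pow_succ]
      exact hsp i

lemma exists_mem_map_C_mul_X_sub_C_eq
    (hpow : ∀ c : D, ∃ N : ℕ, algebraMap A D s ^ N * c ∈ Set.range (algebraMap A D)) {F : A[X]}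
    (hF : aeval u F = 0) :
    ∃ h ∈ Λ.map Polynomial.C,
      h.map (algebraMap A D) * (X - Polynomial.C u) = F.map (algebraMap A D) := by
  obtain ⟨p, hp⟩ : X - Polynomial.C u ∣ F.map (algebraMap A D) := by
    rwa [dvd_iff_isRoot, IsRoot.def, eval_map, ← aeval_def]
  choose N hN using hpow
  have hNp (k : ℕ) : algebraMap A D s ^ p.support.sup (fun j ↦ N (p.coeff j)) * p.coeff k ∈
      Set.range (algebraMap A D) := by
    by_cases hk : k ∈ p.support
    · obtain ⟨c, hc⟩ := Nat.exists_eq_add_of_le (Finset.le_sup (f := fun j ↦ N (p.coeff j)) hk)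
      rw [hc, pow_add, mul_right_comm, mul_comm, ← map_pow]
      exact (algebraMap A D).range.mul_mem ⟨_, rfl⟩ (hN _)
    · exact ⟨0, by rw [notMem_support_iff.1 hk, map_zero, mul_zero]⟩
  obtain ⟨h, hhΛ, rfl⟩ := exists_mem_map_C_map_eq hinj <|
    coeff_mem_image_of_pow_mul_mem hinj hu hs hw hreg (p := p)
      (by rw [mul_comm, ← hp]; exact ⟨F, rfl⟩) hNp
  exact ⟨h, hhΛ, by rw [hp, mul_comm]⟩

end Saturation

attribute [local instance] Polynomial.algebra

lemma mem_interMul_X_sub_C {F : A[X]} :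
    F ∈ interMul (X - Polynomial.C u) (Λ.map Polynomial.C) ↔ ∃ h ∈ Λ.map Polynomial.C,
      h.map (algebraMap A D) * (X - Polynomial.C u) = F.map (algebraMap A D) :=
  mem_interMul

lemma UniformDepthGE.quotient_interMul_X_sub_C [IsNoetherianRing A] [IsJacobsonRing A] {d : ℕ}
    (hinj : Function.Injective (algebraMap A D))
    (hu : ∀ l ∈ Λ, ∃ z, algebraMap A D z = algebraMap A D l * u)
    (hA : UniformDepthGE A (d + 1)) (hΛ : UniformDepthGE (A ⧸ Λ) d) :
    UniformDepthGE (A[X] ⧸ interMul (X - Polynomial.C u) (Λ.map Polynomial.C)) (d + 1) := by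
  refine hA.polynomial.quotient_interMul (map_injective _ hinj) (monic_X_sub_C u).isRegular.right
    (fun h hh ↦ ?_) (hΛ.polynomial.congr (polynomialQuotientEquivQuotientPolynomial Λ))
  rw [mem_map_C_iff] at hh
  obtain ⟨g, hg⟩ : h.map (algebraMap A D) * Polynomial.C u ∈ lifts (algebraMap A D) :=
    (lifts_iff_coeff_lifts _).2 fun k ↦ by
      rw [coeff_mul_C, coeff_map]
      exact hu _ (hh k)
  refine ⟨h * X - g, ?_⟩
  rw [coe_mapRingHom] at hg
  rw [algebraMap_def, coe_mapRingHom, Polynomial.map_sub, Polynomial.map_mul, map_X, hg, mul_sub]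

lemma interMul_X_sub_C_eq_ker_aeval
    (hker : ∀ F : A[X], aeval u F = 0 → ∃ h ∈ Λ.map Polynomial.C,
      h.map (algebraMap A D) * (X - Polynomial.C u) = F.map (algebraMap A D)) :
    interMul (X - Polynomial.C u) (Λ.map Polynomial.C) = RingHom.ker (aeval (R := A) u) := by
  refine le_antisymm (fun F hF ↦ ?_) fun F hF ↦ mem_interMul_X_sub_C.2 (hker F hF)
  obtain ⟨h, -, hhF⟩ := mem_interMul_X_sub_C.1 hF
  rw [RingHom.mem_ker, aeval_def, ← eval_map, ← hhF]
  simp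

lemma UniformDepthGE.of_range_aeval_eq [IsNoetherianRing A] [IsJacobsonRing A] {d : ℕ}
    (hinj : Function.Injective (algebraMap A D))
    (hu : ∀ l ∈ Λ, ∃ z, algebraMap A D z = algebraMap A D l * u)
    (hker : ∀ F : A[X], aeval u F = 0 → ∃ h ∈ Λ.map Polynomial.C,
      h.map (algebraMap A D) * (X - Polynomial.C u) = F.map (algebraMap A D))
    (hA : UniformDepthGE A (d + 1)) (hΛ : UniformDepthGE (A ⧸ Λ) d)
    {S : Subring D} (hS : Set.range (aeval (R := A) u) = S) : UniformDepthGE S (d + 1) := by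
  have h := quotient_interMul_X_sub_C hinj hu hA hΛ
  rw [interMul_X_sub_C_eq_ker_aeval hker] at h
  exact h.congr <| (RingHom.quotientKerEquivRange (aeval (R := A) u).toRingHom).trans <|
    RingEquiv.subringCongr <| SetLike.coe_injective hS

end Evaluation

section ReesAlgebra

open Polynomial

variable {B : Type u} [CommRing B]

lemma coe_fX {J : Ideal B} {c : B} (hc : c ∈ J) : (fX J c hc : B[X]) = Polynomial.C c * X := rfl

lemma reesAlgebra_le_iff {J : Ideal B} {S : Subalgebra B B[X]} :
    reesAlgebra J ≤ S ↔ ∀ c ∈ J, Polynomial.C c * X ∈ S := by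
  rw [← adjoin_monomial_eq_reesAlgebra, Algebra.adjoin_le_iff]
  simp [Set.subset_def, C_mul_X_eq_monomial]

section Presentation

variable {ι : Type*} (a : ι → B)

/-- The presentation of the Rees algebra of `(a_j)` sending the variable `y_j` to `a_j X`. -/
noncomputable def reesPres : MvPolynomial ι B →ₐ[B] reesAlgebra (span (Set.range a)) :=
  MvPolynomial.aeval fun j ↦ fX _ (a j) (subset_span (Set.mem_range_self j))

lemma coe_reesPres (p : MvPolynomial ι B) :
    (reesPres a p : B[X]) = MvPolynomial.aeval (fun j ↦ Polynomial.C (a j) * X) p :=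
  DFunLike.congr_fun (MvPolynomial.comp_aeval (fun j ↦ fX _ (a j) _) (reesAlgebra _).val) p

lemma coe_reesPres_X (j : ι) : (reesPres a (.X j) : B[X]) = Polynomial.C (a j) * X := by
  rw [coe_reesPres, MvPolynomial.aeval_X]

lemma coe_reesPres_of_isHomogeneous_one {p : MvPolynomial ι B}
    (hp : p.IsHomogeneous 1) :
    (reesPres a p : B[X]) = Polynomial.C (MvPolynomial.eval a p) * X := by
  let L : MvPolynomial ι B →ₗ[B] B[X] := (LinearMap.mulRight B (X : B[X])).comp <|
    (Algebra.linearMap B B[X]).comp (MvPolynomial.aeval a).toLinearMap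
  refine LinearMap.eqOn_span (f := ((reesAlgebra _).val.comp (reesPres a)).toLinearMap) (g := L) ?_
    (MvPolynomial.homogeneousSubmodule_one_eq_span_X.le hp)
  rintro _ ⟨j, rfl⟩
  simp [L, coe_reesPres_X, algebraMap_eq]

lemma reesPres_surjective : Function.Surjective (reesPres a) := by
  rintro ⟨z, hz⟩
  suffices h : reesAlgebra _ ≤ ((reesAlgebra _).val.comp (reesPres a)).range by
    obtain ⟨p, hp⟩ := h hz
    exact ⟨p, Subtype.ext hp⟩
  refine reesAlgebra_le_iff.2 fun x hx ↦ ?_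
  obtain ⟨q, hq, rfl⟩ := (mem_span_iff_exists_isHomogeneous a x).1 hx
  exact ⟨q, coe_reesPres_of_isHomogeneous_one a hq⟩

end Presentation

lemma coe_reesPres_cons {k : ℕ} (b : B) (a : Fin k → B) (p : MvPolynomial (Fin (k + 1)) B) :
    (reesPres (Fin.cons b a : Fin (k + 1) → B) p : B[X]) =
      aeval (A := B[X]) (Polynomial.C b * X)
        ((MvPolynomial.finSuccEquiv B k p).map (reesPres a).toRingHom) := by
  have h : (reesAlgebra _).val.comp (reesPres (Fin.cons b a : Fin (k + 1) → B)) =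
      ((aeval (R := reesAlgebra (span (Set.range a))) (A := B[X])
        (Polynomial.C b * X)).restrictScalars B).comp
        ((mapAlgHom (reesPres a)).comp (MvPolynomial.finSuccEquiv B k).toAlgHom) := by
    refine MvPolynomial.algHom_ext fun j ↦ ?_
    refine (coe_reesPres_X _ j).trans ?_
    cases j using Fin.cases with
    | zero => simp [MvPolynomial.finSuccEquiv_X_zero]
    | succ j => simp [MvPolynomial.finSuccEquiv_X_succ, coe_reesPres_X]
  exact DFunLike.congr_fun h p

section Extended

variable {J : Ideal B} {b : B}

lemma exists_coe_eq_mul_C_mul_X {𝔠 : Ideal B} (h𝔠 : ∀ c ∈ 𝔠, c * b ∈ J) {l : reesAlgebra J}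
    (hl : l ∈ 𝔠.map (algebraMap B (reesAlgebra J))) :
    ∃ z : reesAlgebra J, (z : B[X]) = (l : B[X]) * (Polynomial.C b * X) := by
  refine Submodule.span_induction ?_ ⟨0, (zero_mul _).symm⟩ ?_ ?_ hl
  · rintro _ ⟨c, hc, rfl⟩
    refine ⟨fX J _ (h𝔠 c hc), ?_⟩
    change Polynomial.C (c * b) * X = Polynomial.C c * (Polynomial.C b * X)
    rw [Polynomial.C_mul, mul_assoc]
  · rintro l l' - - ⟨z, hz⟩ ⟨z', hz'⟩
    exact ⟨z + z', by rw [AddMemClass.coe_add, AddMemClass.coe_add, hz, hz', add_mul]⟩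
  · rintro y l - ⟨z, hz⟩
    exact ⟨y * z, by rw [smul_eq_mul, MulMemClass.coe_mul, MulMemClass.coe_mul, hz, mul_assoc]⟩

lemma exists_C_pow_mul_mem_reesAlgebra {s : B} (hs : s ∈ J) (c : B[X]) :
    ∃ N : ℕ, Polynomial.C s ^ N * c ∈ reesAlgebra J := by
  refine ⟨c.natDegree, fun i ↦ ?_⟩
  rw [← map_pow, coeff_C_mul]
  obtain hi | hi := le_or_gt i c.natDegree
  · exact Ideal.mul_mem_right _ _ (Ideal.pow_le_pow_right hi (Ideal.pow_mem_pow hs _))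
  · rw [coeff_eq_zero_of_natDegree_lt hi, mul_zero]
    exact zero_mem _

lemma range_aeval_C_mul_X :
    Set.range (aeval (R := reesAlgebra J) (A := B[X]) (Polynomial.C b * X)) =
      reesAlgebra (J ⊔ span {b}) := by
  have hb : Polynomial.C b * X ∈ reesAlgebra (J ⊔ span {b}) :=
    (fX _ b (mem_sup_right (mem_span_singleton_self b))).2
  have hJ (i : ℕ) : J ^ i ≤ (J ⊔ span {b}) ^ i := Ideal.pow_right_mono le_sup_left i
  refine Set.Subset.antisymm ?_ ?_
  · rintro _ ⟨F, rfl⟩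
    rw [aeval_eq_sum_range]
    refine sum_mem fun i _ ↦ ?_
    exact mul_mem (fun j ↦ hJ j ((F.coeff i).2 j)) (pow_mem hb i)
  · suffices h : reesAlgebra (J ⊔ span {b}) ≤ ((aeval (R := reesAlgebra J) (A := B[X])
      (Polynomial.C b * X)).restrictScalars B).range from h
    refine reesAlgebra_le_iff.2 fun x hx ↦ ?_
    obtain ⟨j, hj, _, hy, rfl⟩ := Submodule.mem_sup.1 hx
    obtain ⟨c, rfl⟩ := mem_span_singleton'.1 hy
    refine ⟨Polynomial.C (fX J j hj) + Polynomial.C (algebraMap B _ c) * X, ?_⟩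
    simp [coe_fX, add_mul, mul_assoc]

lemma UniformDepthGE.reesAlgebra_sup_span_singleton [IsNoetherianRing B] [IsJacobsonRing B]
    {𝔠 : Ideal B} (h𝔠 : ∀ c ∈ 𝔠, c * b ∈ J) {d : ℕ}
    (hker : ∀ F : (reesAlgebra J)[X], aeval (A := B[X]) (Polynomial.C b * X) F = 0 →
      ∃ h ∈ (𝔠.map (algebraMap B (reesAlgebra J))).map Polynomial.C,
        h.map (algebraMap (reesAlgebra J) B[X]) * (X - Polynomial.C (Polynomial.C b * X)) =
          F.map (algebraMap (reesAlgebra J) B[X]))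
    (hJ : UniformDepthGE (reesAlgebra J) (d + 1))
    (h : UniformDepthGE (reesAlgebra J ⧸ 𝔠.map (algebraMap B (reesAlgebra J))) d) :
    UniformDepthGE (reesAlgebra (J ⊔ span {b})) (d + 1) := by
  have : IsJacobsonRing (reesAlgebra J) := isJacobsonRing_of_finiteType (A := B)
  exact .of_range_aeval_eq (S := (reesAlgebra (J ⊔ span {b})).toSubring) Subtype.val_injective
    (fun l hl ↦ exists_coe_eq_mul_C_mul_X h𝔠 hl) hker hJ h range_aeval_C_mul_X

lemma coeff_mem_map_of_map_mul_X_sub_C_mul_X_eq {h F : (reesAlgebra J)[X]}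
    (hh : h ∈ (J.map (algebraMap B (reesAlgebra J))).map Polynomial.C)
    (hF : h.map (algebraMap (reesAlgebra J) B[X]) * (X - Polynomial.C (Polynomial.C b * X)) =
      F.map (algebraMap (reesAlgebra J) B[X])) (i : ℕ) :
    F.coeff i ∈ (J ⊔ span {b}).map (algebraMap B _) := by
  have hcoeff (i : ℕ) : ∃ z ∈ (J ⊔ span {b}).map (algebraMap B (reesAlgebra J)),
      (z : B[X]) = (h.coeff i : B[X]) * (Polynomial.C b * X) := by
    obtain ⟨z, hz⟩ := exists_coe_eq_mul_C_mul_X (b := 1) (fun c hc ↦ by rwa [mul_one])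
      (Ideal.mem_map_C_iff.1 hh i)
    refine ⟨algebraMap B _ b * z, mul_mem_right _ _ <| mem_map_of_mem _ <|
      mem_sup_right <| mem_span_singleton_self b, ?_⟩
    rw [MulMemClass.coe_mul, hz]
    change Polynomial.C b * _ = _
    rw [Polynomial.C_1]
    ring
  obtain ⟨z, hz, hzi⟩ := hcoeff i
  cases i with
  | zero =>
    have : F.coeff 0 = -z := Subtype.ext <| by
      have hF0 := congrArg (coeff · 0) hF
      simp only [mul_coeff_zero, coeff_sub, coeff_X_zero, coeff_C_zero, zero_sub, mul_neg,
        coeff_map] at hF0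
      exact hF0.symm.trans (congrArg Neg.neg hzi.symm)
    rw [this]
    exact neg_mem hz
  | succ i =>
    have : F.coeff (i + 1) = h.coeff i - z := Subtype.ext <| by
      have hFi := congrArg (coeff · (i + 1)) hF
      simp only [coeff_mul_X_sub_C, coeff_map] at hFi
      exact hFi.symm.trans (congrArg (_ - ·) hzi.symm)
    rw [this]
    exact sub_mem (map_mono le_sup_left (Ideal.mem_map_C_iff.1 hh i)) hz

end Extended

section QuasiRegular

variable {k : ℕ} {a : Fin k → B}
  (ha : RingHom.ker (reesPres a) ≤ (span (Set.range a)).map MvPolynomial.C)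
include ha

lemma reesPres_mem_map_iff {𝔟 : Ideal B} (h𝔟 : span (Set.range a) ≤ 𝔟)
    {p : MvPolynomial (Fin k) B} :
    reesPres a p ∈ 𝔟.map (algebraMap B _) ↔ p ∈ 𝔟.map MvPolynomial.C := by
  have hmap : 𝔟.map (algebraMap B _) = (𝔟.map MvPolynomial.C).map (reesPres a).toRingHom := by
    rw [Ideal.map_map, ← MvPolynomial.algebraMap_eq]
    exact congrArg (𝔟.map ·) (reesPres a).comp_algebraMap.symm
  have hcomap := comap_map_of_surjective' (reesPres a).toRingHom (reesPres_surjective a)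
    (𝔟.map MvPolynomial.C)
  rw [hmap]
  exact SetLike.ext_iff.1 (hcomap.trans (sup_eq_left.2 (ha.trans (map_mono h𝔟)))) p

lemma UniformDepthGE.quotient_map_reesAlgebra [IsJacobsonRing B]
    {𝔟 : Ideal B} (h𝔟 : span (Set.range a) ≤ 𝔟) {d : ℕ} (h : UniformDepthGE (B ⧸ 𝔟) d) :
    UniformDepthGE (reesAlgebra (span (Set.range a)) ⧸
      𝔟.map (algebraMap B (reesAlgebra (span (Set.range a))))) (d + k) := by
  let φ := (Ideal.Quotient.mk (𝔟.map (algebraMap B (reesAlgebra (span (Set.range a)))))).comp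
    (reesPres a).toRingHom
  have hker : RingHom.ker φ = 𝔟.map MvPolynomial.C := by
    ext p
    rw [RingHom.mem_ker, RingHom.comp_apply, Ideal.Quotient.eq_zero_iff_mem]
    exact reesPres_mem_map_iff ha h𝔟
  have hφ : Function.Surjective φ :=
    Ideal.Quotient.mk_surjective.comp (reesPres_surjective a)
  refine (h.mvPolynomial k).congr <|
    (MvPolynomial.quotientEquivQuotientMvPolynomial 𝔟).toRingEquiv.trans <|
      (quotEquivOfEq hker.symm).trans <| RingHom.quotientKerEquivOfSurjective hφ

variable {b : B} (hb : IsSMulRegular (B ⧸ span (Set.range a)) b)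
include hb

lemma mem_map_of_mul_reesPres_X_mul_mem (j : Fin k) (z : reesAlgebra (span (Set.range a)))
    (hz : algebraMap B _ b * reesPres a (.X j) * z ∈
      (span (Set.range a)).map (algebraMap B (reesAlgebra (span (Set.range a))))) :
    z ∈ (span (Set.range a)).map (algebraMap B _) := by
  obtain ⟨p, rfl⟩ := reesPres_surjective a z
  rw [← AlgHom.commutes (reesPres a), ← map_mul, ← map_mul, reesPres_mem_map_iff ha le_rfl,
    MvPolynomial.mem_map_C_iff] at hz
  rw [reesPres_mem_map_iff ha le_rfl, MvPolynomial.mem_map_C_iff]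
  intro m
  refine mem_of_isSMulRegular_quotient_of_smul_mem hb ?_
  have := hz (Finsupp.single j 1 + m)
  rwa [mul_assoc, MvPolynomial.algebraMap_eq, MvPolynomial.coeff_C_mul,
    MvPolynomial.coeff_X_mul] at this

lemma exists_mem_map_C_mul_X_sub_C_mul_X_eq (j : Fin k)
    {F : (reesAlgebra (span (Set.range a)))[X]}
    (hF : aeval (A := B[X]) (Polynomial.C b * X) F = 0) :
    ∃ h ∈ ((span (Set.range a)).map (algebraMap B (reesAlgebra (span (Set.range a))))).map
        Polynomial.C,
      h.map (algebraMap (reesAlgebra (span (Set.range a))) B[X]) *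
        (X - Polynomial.C (Polynomial.C b * X)) =
          F.map (algebraMap (reesAlgebra (span (Set.range a))) B[X]) := by
  have haj : a j ∈ span (Set.range a) := subset_span (Set.mem_range_self j)
  refine exists_mem_map_C_mul_X_sub_C_eq (s := algebraMap B _ (a j))
    (w := algebraMap B _ b * reesPres a (.X j)) Subtype.val_injective
    (fun l hl ↦ exists_coe_eq_mul_C_mul_X (fun c hc ↦ mul_mem_right b _ hc) hl)
    (mem_map_of_mem _ haj) ?_ (mem_map_of_mul_reesPres_X_mul_mem ha hb j) ?_ hF
  · rw [map_mul]
    change Polynomial.C b * (reesPres a (.X j) : B[X]) = Polynomial.C (a j) * _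
    rw [coe_reesPres_X]
    ring
  · intro c
    obtain ⟨N, hN⟩ := exists_C_pow_mul_mem_reesAlgebra haj c
    exact ⟨N, ⟨_, hN⟩, rfl⟩

lemma ker_reesPres_cons_le (j : Fin k) :
    RingHom.ker (reesPres (Fin.cons b a : Fin (k + 1) → B)) ≤
      (span (Set.range (Fin.cons b a : Fin (k + 1) → B))).map MvPolynomial.C := by
  intro p hp
  have hF : aeval (A := B[X]) (Polynomial.C b * X)
      ((MvPolynomial.finSuccEquiv B k p).map (reesPres a).toRingHom) = 0 := by
    rw [← coe_reesPres_cons, (RingHom.mem_ker).1 hp, ZeroMemClass.coe_zero]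
  obtain ⟨h, hh, hhF⟩ := exists_mem_map_C_mul_X_sub_C_mul_X_eq ha hb j hF
  rw [span_range_cons, MvPolynomial.mem_map_C_iff]
  intro m
  have hcoeff := coeff_mem_map_of_map_mul_X_sub_C_mul_X_eq hh hhF (m 0)
  rw [coeff_map] at hcoeff
  have := MvPolynomial.mem_map_C_iff.1 ((reesPres_mem_map_iff ha le_sup_left).1 hcoeff) m.tail
  rwa [MvPolynomial.finSuccEquiv_coeff_coeff, Finsupp.cons_tail] at this

end QuasiRegular

section Injective

variable {ι : Type*} {a : ι → B}

lemma ker_reesPres_eq_bot_of_isEmpty [IsEmpty ι] : RingHom.ker (reesPres a) = ⊥ := by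
  refine (RingHom.injective_iff_ker_eq_bot _).1 <| (injective_iff_map_eq_zero _).2 fun p hp ↦ ?_
  have hp' := congrArg Subtype.val hp
  rw [coe_reesPres, p.eq_C_of_isEmpty, MvPolynomial.aeval_C, ZeroMemClass.coe_zero] at hp'
  rw [p.eq_C_of_isEmpty, C_injective (hp'.trans Polynomial.C_0.symm), MvPolynomial.C_0]

lemma ker_reesPres_eq_bot_of_unique [Unique ι] (ha : IsSMulRegular B (a default)) :
    RingHom.ker (reesPres a) = ⊥ := by
  refine (RingHom.injective_iff_ker_eq_bot _).1 <| (injective_iff_map_eq_zero _).2 fun p hp ↦ ?_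
  have hcomp : (MvPolynomial.uniqueAlgEquiv B ι p).comp (Polynomial.C (a default) * X) = 0 := by
    have hp' := congrArg Subtype.val hp
    rwa [coe_reesPres, MvPolynomial.aeval_def, algebraMap_eq, ← MvPolynomial.eval₂_uniqueAlgEquiv]
      at hp'
  rw [← map_eq_zero_iff _ (MvPolynomial.uniqueAlgEquiv B ι).injective]
  ext i
  have hi := congrArg (coeff · i) hcomp
  rw [comp_C_mul_X_coeff, mul_comm, coeff_zero] at hi
  exact IsSMulRegular.right_eq_zero_of_smul (ha.pow i) hi

lemma ker_reesPres_cons_eq_bot {a : Fin 0 → B} {b : B}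
    (hb : IsSMulRegular (B ⧸ span (Set.range a)) b) :
    RingHom.ker (reesPres (Fin.cons b a : Fin 1 → B)) = ⊥ := by
  have hbot : span (Set.range a) = ⊥ := by rw [Set.range_eq_empty, span_empty]
  exact ker_reesPres_eq_bot_of_unique (ι := Fin 1) (a := Fin.cons b a)
    (((Submodule.quotEquivOfEqBot _ hbot).isSMulRegular_congr b).1 hb)

end Injective

namespace IsRevWeaklyRegular

variable {m k : ℕ} {a : Fin k → B}

theorem ker_reesPres_le (ha : IsRevWeaklyRegular a) :
    RingHom.ker (reesPres a) ≤ (span (Set.range a)).map MvPolynomial.C := by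
  induction ha with
  | nil a => exact ker_reesPres_eq_bot_of_isEmpty.trans_le bot_le
  | @cons k a b _ hb ih =>
    cases k with
    | zero => exact (ker_reesPres_cons_eq_bot hb).trans_le bot_le
    | succ k => exact ker_reesPres_cons_le ih hb 0

theorem uniformDepthGE_reesAlgebra [IsNoetherianRing B] [IsJacobsonRing B]
    (hB : UniformDepthGE B m) (ha : IsRevWeaklyRegular a) (hk : 0 < k) :
    UniformDepthGE (reesAlgebra (span (Set.range a))) (m + 1) := by
  induction ha with
  | nil => exact absurd hk (lt_irrefl 0)
  | @cons k a b ha hb ih =>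
    cases k with
    | zero =>
      refine (hB.mvPolynomial 1).congr (RingEquiv.ofBijective (reesPres _) ⟨?_, ?_⟩)
      · exact (RingHom.injective_iff_ker_eq_bot _).2 (ker_reesPres_cons_eq_bot hb)
      · exact reesPres_surjective _
    | succ k =>
      have hquot : UniformDepthGE (B ⧸ span (Set.range a)) (m - (k + 1)) :=
        .of_depthGE Ideal.Quotient.mk_surjective fun P hP ↦ ha.depthGE hB hP
      rw [span_range_cons]
      exact .reesAlgebra_sup_span_singleton (𝔠 := span (Set.range a))
        (fun c hc ↦ mul_mem_right b _ hc)
        (fun _ ↦ exists_mem_map_C_mul_X_sub_C_mul_X_eq ha.ker_reesPres_le hb 0) (ih k.succ_pos)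
        ((hquot.quotient_map_reesAlgebra ha.ker_reesPres_le le_rfl).mono le_tsub_add)

end IsRevWeaklyRegular

end ReesAlgebra

section LinearType

open Polynomial

variable {B : Type u} [CommRing B]

/-- The sequence `a` is of linear type: the equations of the Rees algebra of `(a_j)` are generated
by the linear ones, which are the linear forms vanishing at `a`, that is, the syzygies of `a`. -/
def IsLinearType {ι : Type*} (a : ι → B) : Prop :=
  RingHom.ker (reesPres a) ≤ span {p | p.IsHomogeneous 1 ∧ MvPolynomial.eval a p = 0}

lemma coe_reesPres_aeval {ι κ : Type*} {a : ι → B} {a' : κ → B} {ψ : κ → MvPolynomial ι B}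
    (hψ : ∀ j, (ψ j).IsHomogeneous 1 ∧ (ψ j).eval a = a' j) (p : MvPolynomial κ B) :
    (reesPres a (MvPolynomial.aeval ψ p) : B[X]) = reesPres a' p := by
  have hcomp : (MvPolynomial.aeval fun j ↦ Polynomial.C (a j) * X).comp (MvPolynomial.aeval ψ) =
      MvPolynomial.aeval (R := B) fun j ↦ Polynomial.C (a' j) * X :=
    MvPolynomial.algHom_ext fun j ↦ by
      simp [← coe_reesPres, coe_reesPres_of_isHomogeneous_one a (hψ j).1, (hψ j).2]
  rw [coe_reesPres, coe_reesPres, ← hcomp, AlgHom.comp_apply]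

lemma IsLinearType.of_span_range_eq {ι κ : Type*} {a : ι → B} {a' : κ → B} (ha : IsLinearType a)
    (h : span (Set.range a) = span (Set.range a')) : IsLinearType a' := by
  have hψ (j : κ) : ∃ q : MvPolynomial ι B, q.IsHomogeneous 1 ∧ q.eval a = a' j :=
    (mem_span_iff_exists_isHomogeneous a _).1 (h ▸ subset_span (Set.mem_range_self j))
  have hφ (j : ι) : ∃ q : MvPolynomial κ B, q.IsHomogeneous 1 ∧ q.eval a' = a j :=
    (mem_span_iff_exists_isHomogeneous a' _).1 (h ▸ subset_span (Set.mem_range_self j))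
  choose ψ hψ using hψ
  choose φ hφ using hφ
  have hev (q : MvPolynomial ι B) : (MvPolynomial.aeval φ q).eval a' = q.eval a := by
    induction q using MvPolynomial.induction_on with
    | C c => simp
    | add p q hp hq => simp only [map_add, hp, hq]
    | mul_X p j hp => simp only [map_mul, MvPolynomial.aeval_X, hp, hφ, MvPolynomial.eval_X]
  set L := span {p : MvPolynomial κ B | p.IsHomogeneous 1 ∧ p.eval a' = 0}
  have hL : (span {p : MvPolynomial ι B | p.IsHomogeneous 1 ∧ p.eval a = 0}).map
      (MvPolynomial.aeval φ) ≤ L := by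
    rw [map_le_iff_le_comap, span_le]
    exact fun q hq ↦ subset_span
      ⟨by simpa using hq.1.aeval φ fun j ↦ (hφ j).1, (hev q).trans hq.2⟩
  have hmk : (Ideal.Quotient.mkₐ B L).comp ((MvPolynomial.aeval φ).comp (MvPolynomial.aeval ψ)) =
      Ideal.Quotient.mkₐ B L := by
    refine MvPolynomial.algHom_ext fun j ↦ Ideal.Quotient.eq.2 (subset_span ⟨?_, ?_⟩)
    · simpa using ((hψ j).1.aeval φ fun j ↦ (hφ j).1).sub (MvPolynomial.isHomogeneous_X B j)
    · refine (map_sub _ _ _).trans (sub_eq_zero.2 ?_)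
      change MvPolynomial.eval a' (MvPolynomial.aeval φ (MvPolynomial.aeval ψ (.X j))) = _
      rw [hev, MvPolynomial.aeval_X, (hψ j).2, MvPolynomial.eval_X]
  intro p hp
  have hψp : reesPres a (MvPolynomial.aeval ψ p) = 0 :=
    Subtype.ext ((coe_reesPres_aeval hψ p).trans (congrArg Subtype.val hp))
  refine Ideal.Quotient.eq_zero_iff_mem.1 ((DFunLike.congr_fun hmk p).symm.trans ?_)
  exact Ideal.Quotient.eq_zero_iff_mem.2 (hL (mem_map_of_mem _ (ha hψp)))

lemma YLinear.isHomogeneous_one_of_reesPres_eq_zero {n : ℕ} {f : Fin (n + 1) → B}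
    {p : MvPolynomial (Fin (n + 1)) B} (hp : YLinear p) (h : reesPres f p = 0) :
    p.IsHomogeneous 1 := by
  have h0 : MvPolynomial.constantCoeff p = 0 := by
    have hp0 := congrArg (fun z : reesAlgebra _ ↦ evalRingHom 0 (z : B[X])) h
    simp only [coe_reesPres, MvPolynomial.map_aeval] at hp0
    simpa using hp0
  intro w hw
  have hdeg : Finsupp.weight 1 w = ∑ j, w j := by
    simp [Finsupp.weight_apply, Finsupp.sum_fintype]
  have hw0 : w ≠ 0 := by
    rintro rfl
    exact hw h0
  rw [hdeg]
  refine le_antisymm (hp w hw) (Nat.one_le_iff_ne_zero.2 fun hsum ↦ hw0 ?_)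
  ext j
  simpa using Finset.sum_eq_zero_iff.1 hsum j

lemma IsLinearTypePres.isLinearType {n : ℕ} {I : Ideal B} {f : Fin (n + 1) → B}
    {hf : ∀ j, f j ∈ I} (hI : I = span (Set.range f))
    (h : IsLinearTypePres (reesStructureMap I f hf)) : IsLinearType f := by
  subst hI
  obtain ⟨G, hG, hker⟩ := h
  change RingHom.ker (reesPres f) = span G at hker
  rw [IsLinearType, hker, span_le]
  intro p hp
  have hp0 : reesPres f p = 0 := RingHom.mem_ker.1 (hker.ge (subset_span hp))
  have hp1 := (hG p hp).isHomogeneous_one_of_reesPres_eq_zero hp0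
  refine subset_span ⟨hp1, ?_⟩
  have := congrArg (fun z : reesAlgebra _ ↦ coeff (z : B[X]) 1) hp0
  simpa [coe_reesPres_of_isHomogeneous_one f hp1] using this

lemma exists_finSuccEquiv_eq_of_isHomogeneous_one {k : ℕ} {p : MvPolynomial (Fin (k + 1)) B}
    (hp : p.IsHomogeneous 1) :
    ∃ (c : B) (q : MvPolynomial (Fin k) B), q.IsHomogeneous 1 ∧
      MvPolynomial.finSuccEquiv B k p =
        Polynomial.C (MvPolynomial.C c) * X + Polynomial.C q := by
  have hdeg : (MvPolynomial.finSuccEquiv B k p).natDegree ≤ 1 := by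
    rw [MvPolynomial.natDegree_finSuccEquiv]
    exact (MvPolynomial.degreeOf_le_totalDegree p 0).trans hp.totalDegree_le
  have hcoeff : ((MvPolynomial.finSuccEquiv B k p).coeff 1).totalDegree = 0 :=
    (MvPolynomial.totalDegree_zero_iff_isHomogeneous _).2
      (hp.finSuccEquiv_coeff_isHomogeneous 1 0 rfl)
  refine ⟨MvPolynomial.coeff 0 ((MvPolynomial.finSuccEquiv B k p).coeff 1), _,
    hp.finSuccEquiv_coeff_isHomogeneous 0 1 rfl, ?_⟩
  rw [← MvPolynomial.totalDegree_eq_zero_iff_eq_C.1 hcoeff]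
  exact eq_X_add_C_of_natDegree_le_one hdeg

section Cons

variable {k : ℕ} {a : Fin k → B} {b : B}

lemma exists_mem_map_colon_of_isHomogeneous_one {p : MvPolynomial (Fin (k + 1)) B}
    (hp : p.IsHomogeneous 1) (hp0 : MvPolynomial.eval (Fin.cons b a : Fin (k + 1) → B) p = 0) :
    ∃ h ∈ (((span (Set.range a)).colon {b}).map
        (algebraMap B (reesAlgebra (span (Set.range a))))).map Polynomial.C,
      h.map (algebraMap (reesAlgebra (span (Set.range a))) B[X]) *
        (X - Polynomial.C (Polynomial.C b * X)) =
          ((MvPolynomial.finSuccEquiv B k p).map (reesPres a).toRingHom).map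
            (algebraMap (reesAlgebra (span (Set.range a))) B[X]) := by
  obtain ⟨c, q, hq, hcq⟩ := exists_finSuccEquiv_eq_of_isHomogeneous_one hp
  have hsyz : c * b + MvPolynomial.eval a q = 0 := by
    simpa [MvPolynomial.eval_eq_eval_mv_eval', hcq] using hp0
  have hc : c ∈ (span (Set.range a)).colon {b} := by
    rw [Submodule.mem_colon_singleton, smul_eq_mul, eq_neg_of_add_eq_zero_left hsyz]
    exact neg_mem ((mem_span_iff_exists_isHomogeneous a _).2 ⟨q, hq, rfl⟩)
  refine ⟨_, mem_map_of_mem _ (mem_map_of_mem _ hc), ?_⟩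
  have hCq : algebraMap (reesAlgebra (span (Set.range a))) B[X] (reesPres a q) =
      -(Polynomial.C c * (Polynomial.C b * X)) := by
    refine (coe_reesPres_of_isHomogeneous_one a hq).trans ?_
    rw [eq_neg_of_add_eq_zero_right hsyz]
    simp [mul_assoc]
  have hCc : algebraMap (reesAlgebra (span (Set.range a))) B[X] (algebraMap B _ c) =
      Polynomial.C c := rfl
  simp only [hcq, Polynomial.map_add, Polynomial.map_mul, map_C, map_X, AlgHom.toRingHom_eq_coe,
    RingHom.coe_coe, MvPolynomial.algHom_C, hCc, hCq, map_neg, map_mul]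
  ring

lemma IsLinearType.exists_mem_map_colon (h : IsLinearType (Fin.cons b a : Fin (k + 1) → B))
    {F : (reesAlgebra (span (Set.range a)))[X]}
    (hF : aeval (A := B[X]) (Polynomial.C b * X) F = 0) :
    ∃ h ∈ (((span (Set.range a)).colon {b}).map
        (algebraMap B (reesAlgebra (span (Set.range a))))).map Polynomial.C,
      h.map (algebraMap (reesAlgebra (span (Set.range a))) B[X]) *
        (X - Polynomial.C (Polynomial.C b * X)) =
          F.map (algebraMap (reesAlgebra (span (Set.range a))) B[X]) := by
  obtain ⟨p', rfl⟩ := Polynomial.map_surjective (reesPres a).toRingHom (reesPres_surjective a) F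
  obtain ⟨p, rfl⟩ := (MvPolynomial.finSuccEquiv B k).surjective p'
  have hp : p ∈ RingHom.ker (reesPres (Fin.cons b a : Fin (k + 1) → B)) :=
    Subtype.ext ((coe_reesPres_cons b a p).trans hF)
  refine Submodule.span_induction (fun q hq ↦
    exists_mem_map_colon_of_isHomogeneous_one hq.1 hq.2) ⟨0, zero_mem _, by simp⟩ ?_ ?_ (h hp)
  · rintro q q' - - ⟨z, hz, hzq⟩ ⟨z', hz', hzq'⟩
    exact ⟨z + z', add_mem hz hz', by
      simp only [map_add, Polynomial.map_add, add_mul, hzq, hzq']⟩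
  · rintro r q - ⟨z, hz, hzq⟩
    refine ⟨(MvPolynomial.finSuccEquiv B k r).map (reesPres a).toRingHom * z,
      mul_mem_left _ _ hz, ?_⟩
    rw [Polynomial.map_mul, mul_assoc, hzq, smul_eq_mul, map_mul, Polynomial.map_mul,
      Polynomial.map_mul]

theorem IsRevWeaklyRegular.uniformDepthGE_reesAlgebra_cons [IsNoetherianRing B] [IsJacobsonRing B]
    {m : ℕ} (hB : UniformDepthGE B m) (ha : IsRevWeaklyRegular a) (hk : 0 < k)
    (hlin : IsLinearType (Fin.cons b a : Fin (k + 1) → B))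
    (hdepth : ∀ P : Ideal B, P.IsMaximal →
      DepthGE P (m - k) (B ⧸ span (Set.range (Fin.cons b a : Fin (k + 1) → B)))) :
    UniformDepthGE (reesAlgebra (span (Set.range (Fin.cons b a : Fin (k + 1) → B)))) (m + 1) := by
  rw [span_range_cons] at hdepth ⊢
  have hquot : UniformDepthGE (B ⧸ (span (Set.range a)).colon {b}) (m - k) :=
    .of_depthGE Ideal.Quotient.mk_surjective fun P hP ↦
      (ha.depthGE hB hP).quotient_colon (hdepth P hP)
  have hle : span (Set.range a) ≤ (span (Set.range a)).colon {b} := fun x hx ↦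
    Submodule.mem_colon_singleton.2 (mul_mem_right b _ hx)
  exact .reesAlgebra_sup_span_singleton (fun c hc ↦ Submodule.mem_colon_singleton.1 hc)
    (fun _ ↦ hlin.exists_mem_map_colon) (ha.uniformDepthGE_reesAlgebra hB hk)
    ((hquot.quotient_map_reesAlgebra ha.ker_reesPres_le hle).mono le_tsub_add)

end Cons

end LinearType

section Depth

variable {R : Type*} [CommRing R]

namespace IsRegSeq

lemma le_height {k : ℕ} {f : Fin k → R} (hf : IsRegSeq f) {i : ℕ} (hi : i ≤ k)
    (p : PrimeSpectrum R) (hp : ∀ j : Fin k, j < i → f j ∈ p.asIdeal) :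
    (i : ℕ∞) ≤ Order.height p := by
  induction i generalizing p with
  | zero => simp
  | succ i ih =>
    set J := span (f '' {j | j < ⟨i, hi⟩})
    have hJp : J ≤ p.asIdeal := span_le.2 <| by
      rintro _ ⟨j, hj, rfl⟩
      exact hp j (Nat.lt_succ_of_lt hj)
    obtain ⟨q, hq, hqp⟩ := exists_minimalPrimes_le hJp
    have hreg : IsSMulRegular (R ⧸ J) (f ⟨i, hi⟩) :=
      (isSMulRegular_quotient_iff_mem_of_smul_mem _ _).2 fun x hx ↦
        hf.1 ⟨i, hi⟩ x (by rwa [mul_comm])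
    have hfq : f ⟨i, hi⟩ ∉ q :=
      hreg.notMem_of_mem_minimalPrimes (by rwa [annihilator_quotient])
    have hlt : (⟨q, hq.isPrime⟩ : PrimeSpectrum R) < p :=
      lt_of_le_not_ge hqp fun hpq ↦ hfq (hpq (hp ⟨i, hi⟩ i.lt_succ_self))
    calc ((i + 1 : ℕ) : ℕ∞) = i + 1 := Nat.cast_succ i
      _ ≤ Order.height (⟨q, hq.isPrime⟩ : PrimeSpectrum R) + 1 := by
        gcongr
        exact ih (Nat.le_of_succ_le hi) _ fun j hj ↦ hq.1.2 (subset_span ⟨j, hj, rfl⟩)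
      _ ≤ Order.height p := Order.height_add_one_le hlt

lemma of_isWeaklyRegular {rs : List R} (hrs : RingTheory.Sequence.IsWeaklyRegular R rs)
    (htop : ofList rs ≠ ⊤) : IsRegSeq fun i : Fin rs.length ↦ rs[i] := by
  refine ⟨fun i x hx ↦ ?_, ?_⟩
  · have hspan : span ((fun i : Fin rs.length ↦ rs[i]) '' {j | j < i}) = ofList (rs.take i) := by
      refine congrArg span (Set.ext fun y ↦ ?_)
      rw [Set.mem_ofPred, List.mem_take_iff_getElem]
      constructor
      · rintro ⟨j, hj, rfl⟩
        exact ⟨j, lt_min hj j.2, rfl⟩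
      · rintro ⟨j, hj, rfl⟩
        exact ⟨⟨j, (lt_min_iff.1 hj).2⟩, (lt_min_iff.1 hj).1, rfl⟩
    have hreg := (RingTheory.Sequence.isWeaklyRegular_iff_Fin R rs).1 hrs i
    rw [smul_eq_mul, mul_top, ← hspan] at hreg
    exact mem_of_isSMulRegular_quotient_of_smul_mem hreg (by rwa [smul_eq_mul, mul_comm])
  · rwa [show Set.range (fun i : Fin rs.length ↦ rs[i]) = {r | r ∈ rs} from Set.ext fun r ↦ by
      simp [List.mem_iff_get, eq_comm]]

end IsRegSeq

lemma depthAt_le_idealHeight (P : Ideal R) : depthAt P ≤ idealHeight P := by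
  refine sSup_le ?_
  rintro _ ⟨k, g, rfl, hg, hreg⟩
  exact le_iInf₂ fun p hp ↦ hreg.le_height le_rfl p fun j _ ↦ hp (hg j)

lemma UniformDepthGE.le_depthAt {d : ℕ} (h : UniformDepthGE R d) {P : Ideal R}
    (hP : P.IsMaximal) : d ≤ depthAt P := by
  obtain ⟨rs, rfl, hmem, hrs⟩ := h P hP
  exact le_sSup ⟨_, _, rfl, fun i ↦ hmem _ (rs.getElem_mem i.2), .of_isWeaklyRegular hrs
    (ne_top_of_le_ne_top hP.ne_top (span_le.2 hmem))⟩

lemma idealHeight_le_of_ringKrullDim_le {d : ℕ} (h : ringKrullDim R ≤ d) {P : Ideal R}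
    (hP : P ≠ ⊤) : idealHeight P ≤ d := by
  obtain ⟨M, hM, hPM⟩ := exists_le_maximal P hP
  refine (iInf₂_le (⟨M, hM.isPrime⟩ : PrimeSpectrum R) hPM).trans ?_
  exact_mod_cast (Order.height_le_krullDim _).trans h

theorem UniformDepthGE.isCMRing {d : ℕ} (h : UniformDepthGE R d) (hdim : ringKrullDim R ≤ d) :
    IsCMRing R := fun P hP ↦
  (depthAt_le_idealHeight P).antisymm <|
    (idealHeight_le_of_ringKrullDim_le hdim hP.ne_top).trans (h.le_depthAt hP)

end Depth

section Dimension

lemma ringKrullDim_le_of_isIntegral {R S : Type*} [CommRing R] [CommRing S] [Algebra R S]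
    [Algebra.IsIntegral R S] : ringKrullDim S ≤ ringKrullDim R :=
  Order.krullDim_le_of_strictMono (PrimeSpectrum.comap (algebraMap R S)) fun p q hpq ↦
    IsIntegral.comap_lt_comap (I := p.asIdeal) (J := q.asIdeal) hpq

lemma ringKrullDim_mvPolynomial_field (K : Type*) [Field K] (m : ℕ) :
    ringKrullDim (MvPolynomial (Fin m) K) = m := by
  simp [MvPolynomial.ringKrullDim_of_isNoetherianRing]

theorem ringKrullDim_le_of_trdeg_le (K : Type*) {A : Type*} [Field K] [CommRing A] [Algebra K A]
    [Algebra.FiniteType K A] {d : ℕ} (h : Algebra.trdeg K A ≤ d) : ringKrullDim A ≤ d := by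
  cases subsingleton_or_nontrivial A
  · simp [ringKrullDim_eq_bot_of_subsingleton]
  obtain ⟨s, g, hg, hint⟩ := exists_integral_inj_algHom_of_fg K A
  have hs : s ≤ d := by
    have hle := (lift_trdeg_le_of_injective g hg).trans (Cardinal.lift_le.2 h)
    simpa using hle
  let : Algebra (MvPolynomial (Fin s) K) A := g.toRingHom.toAlgebra
  have : Algebra.IsIntegral (MvPolynomial (Fin s) K) A := ⟨hint⟩
  refine (ringKrullDim_le_of_isIntegral (R := MvPolynomial (Fin s) K)).trans ?_
  rw [ringKrullDim_mvPolynomial_field]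
  exact_mod_cast hs

lemma ringKrullDim_reesAlgebra_le (K : Type*) {B : Type*} [Field K] [CommRing B] [IsDomain B]
    [Algebra K B] [Algebra.FiniteType K B] {d : ℕ} (h : Algebra.trdeg K B ≤ d) (I : Ideal B) :
    ringKrullDim (reesAlgebra I) ≤ (d + 1 : ℕ) := by
  have : IsNoetherianRing B := Algebra.FiniteType.isNoetherianRing K B
  have : Algebra.FiniteType K (reesAlgebra I) := .trans (S := B) inferInstance inferInstance
  refine ringKrullDim_le_of_trdeg_le K ?_
  calc Algebra.trdeg K (reesAlgebra I)
      ≤ Algebra.trdeg K (Polynomial B) :=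
        trdeg_le_of_injective ((reesAlgebra I).val.restrictScalars K)
          Subtype.val_injective
    _ = Algebra.trdeg K B + 1 := by
      rw [← trdeg_add_eq K B, Polynomial.trdeg_of_isDomain]
    _ ≤ (d + 1 : ℕ) := by push_cast; gcongr

end Dimension

lemma minGens_eq_zero_of_idealHeight_eq_zero {R : Type*} [CommRing R] [IsDomain R] {I : Ideal R}
    (h : idealHeight I = 0) : minGens I = 0 := by
  have hI : I = ⊥ := by
    by_contra hI
    have hone : 1 ≤ idealHeight I := le_iInf₂ fun p hp ↦
      Order.one_le_iff_pos.2 <| Order.height_pos.2 fun hmin ↦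
        hI (le_bot_iff.1 (hp.trans (hmin (b := ⟨⊥, isPrime_bot⟩) bot_le)))
    exact one_ne_zero (le_bot_iff.1 (h ▸ hone))
  exact Nat.eq_zero_of_le_zero <| Nat.sInf_le ⟨Fin.elim0, by simp [hI]⟩

theorem reesAlgebra_isCM_general (K : Type*) {B : Type u} [Field K] [CommRing B] [IsDomain B]
    [Algebra K B] [Algebra.FiniteType K B] {m n : ℕ} (hB : UniformDepthGE B m)
    (htr : Algebra.trdeg K B ≤ m) (hn : 0 < n) (I : Ideal B) (f : Fin (n + 1) → B)
    (hf : ∀ j, f j ∈ I) (hI : I = span (Set.range f)) (hht : n ≤ idealHeight I)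
    (hlt : IsLinearTypePres (reesStructureMap I f hf)) (hpd : projDim B (B ⧸ I) ≤ n) :
    IsCMRing (reesAlgebra I) := by
  have : IsNoetherianRing B := Algebra.FiniteType.isNoetherianRing K B
  have : IsJacobsonRing B := isJacobsonRing_of_finiteType (A := K)
  obtain ⟨a, b, ha, hab⟩ := exists_isRevWeaklyRegular_span_range_cons_eq hB
    (ringKrullDim_le_of_trdeg_le K htr) f (hI ▸ hht)
  have hlin : IsLinearType (Fin.cons b a : Fin (n + 1) → B) :=
    (hlt.isLinearType hI).of_span_range_eq hab.symm
  rw [← hab] at hI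
  subst hI
  have hR := ha.uniformDepthGE_reesAlgebra_cons hB hn hlin
    fun P hP ↦ depthGE_of_projDim_le hB hP hpd
  exact hR.isCMRing (ringKrullDim_reesAlgebra_le K htr _)

/-- Let `I` be a graded ideal of linear type in a standard graded polynomial ring over a
field, with `μ(I) = ht(I) + 1 = n + 1` and `pd_B (B/I) = n`.  Then the Rees algebra
`R(I)` is Cohen–Macaulay. -/
theorem reesAlgebra_isCM (K : Type) [Field K] (m n : ℕ)
    (I : Ideal (MvPolynomial (Fin m) K))
    (f : Fin (n + 1) → MvPolynomial (Fin m) K) (hf : ∀ j, f j ∈ I)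
    (hI : I = Ideal.span (Set.range f))
    (hhomog : ∀ j, ∃ dj : ℕ, f j ∈ MvPolynomial.homogeneousSubmodule (Fin m) K dj)
    (hmu : minGens I = n + 1) (hht : idealHeight I = (n : ℕ∞))
    (hlt : IsLinearTypePres (reesStructureMap I f hf))
    (hpd : projDim (MvPolynomial (Fin m) K) (MvPolynomial (Fin m) K ⧸ I) = (n : ℕ∞)) :
    IsCMRing (reesAlgebra I) := by
  have hn : n ≠ 0 := by
    rintro rfl
    simp [minGens_eq_zero_of_idealHeight_eq_zero hht] at hmu
  have hB : UniformDepthGE (MvPolynomial (Fin m) K) m := by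
    simpa using (UniformDepthGE.zero K).mvPolynomial m
  exact reesAlgebra_isCM_general K hB (by simp) hn.pos I f hf hI hht.ge hlt hpd.le
end

section
/- Let X be the order-t skew-symmetric matrix of indeterminates whose upper-left 3×3 block is zero (entries x_{ij} for 1 ≤ i < j ≤ t except x_{12} = x_{13} = x_{23} = 0). For odd t ≥ 5, the Pfaffians Pf_{123̄}(X), Pf_{1̄}(X), Pf_{2̄}(X), Pf_{3̄}(X) form a d-sequence in K[X] such that Pf_{123̄}(X), Pf_{1̄}(X), Pf_{2̄}(X) is a regular sequence. -/
open Ideal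

/-- A sequence is a d-sequence if `(⟨f_0,…,f_{i-1}⟩ : f_i) ∩ ⟨f⟩ = ⟨f_0,…,f_{i-1}⟩`. -/
def IsDSequence {A : Type*} [CommRing A] {n : ℕ} (f : Fin n → A) : Prop :=
  ∀ i : Fin n,
    (Ideal.span (f '' {j | j < i})).colon (Ideal.span {f i}) ⊓ Ideal.span (Set.range f)
      = Ideal.span (f '' {j | j < i})

/-- The Pfaffian of an `n × n` matrix, defined by the recursive expansion along the
first row: `pf(M) = ∑_j (-1)^j M 0 (j+1) · pf(M with rows/columns 0 and j+1 deleted)`,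
with `pf = 1` in size `0` and `pf = 0` in odd sizes. -/
def pfaffian {R : Type*} [CommRing R] : (n : ℕ) → Matrix (Fin n) (Fin n) R → R
  | 0, _ => 1
  | 1, _ => 0
  | (n + 2), M =>
      ∑ j : Fin (n + 1), (-1 : R) ^ (j : ℕ) * M 0 j.succ *
        pfaffian n (M.submatrix (fun k => (j.succAbove k).succ)
          (fun k => (j.succAbove k).succ))

/-- The variables of the skew-symmetric matrix `X`: pairs `(i,j)` with `i < j` and
`j ≥ 3` (the upper-left `3 × 3` block being zero). -/
def PairVar (t : ℕ) : Type := {p : Fin t × Fin t // (p.1 : ℕ) < (p.2 : ℕ) ∧ 3 ≤ (p.2 : ℕ)}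

/-- The generic order-`t` skew-symmetric matrix with zero upper-left `3 × 3` block. -/
noncomputable def Xmat (K : Type) [Field K] (t : ℕ) :
    Matrix (Fin t) (Fin t) (MvPolynomial (PairVar t) K) := fun i j =>
  if h : (i : ℕ) < (j : ℕ) ∧ 3 ≤ (j : ℕ) then MvPolynomial.X ⟨(i, j), h⟩
  else if h' : (j : ℕ) < (i : ℕ) ∧ 3 ≤ (i : ℕ) then - MvPolynomial.X ⟨(j, i), h'⟩
  else 0

/-- The order embedding `Fin n → Fin (n+1)` skipping the index `a`. -/
def emb1 (a : ℕ) {n : ℕ} (k : Fin n) : Fin (n + 1) :=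
  ⟨if (k : ℕ) < a then (k : ℕ) else (k : ℕ) + 1, by have := k.2; split_ifs <;> omega⟩

/-- The order embedding `Fin n → Fin (n+2)` skipping the indices `a < b`. -/
def emb2 (a b : ℕ) {n : ℕ} (k : Fin n) : Fin (n + 2) :=
  ⟨if (k : ℕ) < a then (k : ℕ) else if (k : ℕ) + 1 < b then (k : ℕ) + 1 else (k : ℕ) + 2,
   by have := k.2; split_ifs <;> omega⟩

/-- The order embedding `Fin n → Fin (n+3)` skipping the indices `0, 1, 2`. -/
def emb3 {n : ℕ} (k : Fin n) : Fin (n + 3) := ⟨(k : ℕ) + 3, by have := k.2; omega⟩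

/-!
Let `f` be the regular sequence `Pf_{123̄}, Pf_{1̄}, Pf_{2̄}` and let `h` be `Pf_{3̄}`. Given that
`f` is regular, the point is that `r * h ^ 2 ∈ ⟨f⟩` implies `r * h ∈ ⟨f⟩`. Let `p` be the Pfaffian
on the indices `≥ 5`, counted from `0`, and let `f'` consist of the Pfaffians on these indices
together with `{3, 4}`, `{2, 3}` and `{2, 4}`. The Plücker relations give `p * ⟨f⟩ ⊆ ⟨f'⟩` and
`h * ⟨f'⟩ ⊆ ⟨f⟩`. As `h` is a nonzerodivisor modulo `f'` and `p` is one modulo `f`, the membership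
`r * h ^ 2 ∈ ⟨f⟩` yields `r * p ∈ ⟨f'⟩`, hence `r * h * p ∈ ⟨f⟩` and finally `r * h ∈ ⟨f⟩`.

All the regularity follows from leading monomials in pairwise disjoint sets of variables. Give
each index `i` a weight `ω i` such that the indices in a Pfaffian split, in only one way, into
pairs of constant weight sum `c` avoiding the zero block of `X`. In a lexicographic order in which
`x_{ij}` is the larger, the larger `|ω i - ω j|` is, the leading monomial is the product of the
`x_{ij}` over these pairs, so that Pfaffians with different `c` have disjoint leading monomials.
One choice of weights works for `f` and `p`, another one for `f'` and `h`.
-/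

section Pfaffian

variable {ι R : Type*} [CommRing R]

/-- The Pfaffian of the submatrix of `M` with rows and columns listed in `l`, which need neither be
sorted nor free of repetitions; the expansion is along the first listed row. -/
def listPfaffian (M : Matrix ι ι R) : List ι → R
  | [] => 1
  | a :: l => ∑ j : Fin l.length, (-1) ^ (j : ℕ) * M a l[j] * listPfaffian M (l.eraseIdx j)
termination_by l => l.length
decreasing_by
  rw [List.length_eraseIdx_of_lt j.2, List.length_cons]
  omega

/-- A matrix is alternating if it is skew-symmetric with zero diagonal; the second condition matters
in characteristic two. -/
structure IsAlternating (M : Matrix ι ι R) : Prop where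
  diag (i : ι) : M i i = 0
  skew (i j : ι) : M i j = -M j i

@[simp]
theorem listPfaffian_nil (M : Matrix ι ι R) : listPfaffian M [] = 1 := by
  rw [listPfaffian]

theorem listPfaffian_cons (M : Matrix ι ι R) (a : ι) (l : List ι) :
    listPfaffian M (a :: l) =
      ∑ j : Fin l.length, (-1) ^ (j : ℕ) * M a l[j] * listPfaffian M (l.eraseIdx j) := by
  rw [listPfaffian]

theorem eraseIdx_ofFn {n : ℕ} (u : Fin (n + 1) → ι) (j : Fin (n + 1)) :
    (List.ofFn u).eraseIdx j = List.ofFn fun k => u (j.succAbove k) := by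
  refine List.ext_getElem (by simp [List.length_eraseIdx]; omega) fun i _ hi => ?_
  rw [List.length_ofFn] at hi
  simp only [List.getElem_eraseIdx, List.getElem_ofFn]
  split_ifs with h
  · exact congrArg u (Fin.succAbove_of_castSucc_lt j ⟨i, hi⟩ h).symm
  · exact congrArg u (Fin.succAbove_of_le_castSucc j ⟨i, hi⟩ (not_lt.mp h)).symm

theorem pfaffian_submatrix (M : Matrix ι ι R) :
    ∀ (n : ℕ) (u : Fin n → ι), pfaffian n (M.submatrix u u) = listPfaffian M (List.ofFn u)
  | 0, u => by simp [pfaffian]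
  | 1, u => by simp [pfaffian, listPfaffian_cons]
  | n + 2, u => by
    rw [pfaffian, List.ofFn_succ, listPfaffian_cons,
      ← (finCongr (List.length_ofFn (f := fun i => u i.succ)).symm).sum_comp]
    refine Finset.sum_congr rfl fun j _ => ?_
    have ih := pfaffian_submatrix M n fun k => u (j.succAbove k).succ
    simp only [finCongr_apply, Fin.val_cast, Fin.getElem_fin, List.getElem_ofFn,
      Matrix.submatrix_apply, Matrix.submatrix_submatrix]
    rw [eraseIdx_ofFn (fun i => u i.succ) j, ← ih]
    rfl

theorem listPfaffian_mem {S : Type*} [SetLike S R] [SubringClass S R] (A : S) {M : Matrix ι ι R}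
    (l : List ι) (h : ∀ a ∈ l, ∀ b ∈ l, M a b ∈ A) : listPfaffian M l ∈ A := by
  induction l using listPfaffian.induct with
  | case1 => simp [one_mem]
  | case2 a l ih =>
    rw [listPfaffian_cons]
    refine sum_mem fun j _ => mul_mem (mul_mem (pow_mem (neg_mem (one_mem A)) _) ?_) (ih j ?_)
    · exact h _ (by simp) _ (by simp)
    · have hsub : l.eraseIdx j ⊆ a :: l :=
        List.Subset.trans (List.eraseIdx_subset ..) (List.subset_cons_self ..)
      exact fun b hb c hc => h b (hsub hb) c (hsub hc)

theorem listPfaffian_cons_cons_sub_mem {S : Type*} [SetLike S R] [SubringClass S R] (A : S)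
    {M : Matrix ι ι R} {a b : ι} {l : List ι} (ha : ∀ c ∈ l, M a c ∈ A)
    (hl : ∀ c ∈ b :: l, ∀ d ∈ b :: l, M c d ∈ A) :
    listPfaffian M (a :: b :: l) - M a b * listPfaffian M l ∈ A := by
  have hrest : listPfaffian M (a :: b :: l) - M a b * listPfaffian M l =
      ∑ j : Fin l.length, (-1) ^ (j + 1 : ℕ) * M a l[j] *
        listPfaffian M (b :: l.eraseIdx j) := by
    rw [listPfaffian_cons]
    refine (congrArg (· - _) (Fin.sum_univ_succ _)).trans ?_
    simp
  rw [hrest]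
  refine sum_mem fun j _ => mul_mem (mul_mem (pow_mem (neg_mem (one_mem A)) _) ?_) ?_
  · exact ha _ (by simp)
  · have hsub : b :: l.eraseIdx j ⊆ b :: l := List.cons_subset_cons _ (List.eraseIdx_subset ..)
    exact listPfaffian_mem A _ fun c hc d hd => hl c (hsub hc) d (hsub hd)

theorem contractLeft_list_prod {V : Type*} [AddCommGroup V] [Module R V] (Q : QuadraticForm R V)
    (d : Module.Dual R V) (v : ι → V) (l : List ι) :
    CliffordAlgebra.contractLeft d (l.map fun i => CliffordAlgebra.ι Q (v i)).prod =
      ∑ j : Fin l.length, ((-1 : R) ^ (j : ℕ) * d (v l[j])) •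
        ((l.eraseIdx j).map fun i => CliffordAlgebra.ι Q (v i)).prod := by
  induction l with
  | nil => simp
  | cons a l ih =>
    rw [List.map_cons, List.prod_cons, CliffordAlgebra.contractLeft_ι_mul, ih]
    refine Eq.trans ?_ (Fin.sum_univ_succ _).symm
    rw [Finset.mul_sum, sub_eq_add_neg, ← Finset.sum_neg_distrib]
    congr 1
    · simp
    · exact Finset.sum_congr rfl fun j _ => by simp [pow_succ]

variable (R) in
/-- The product of the basis vectors indexed by `l` in the exterior algebra of the free module on
`ι`. -/
noncomputable def basisWedge (l : List ι) : ExteriorAlgebra R (ι →₀ R) :=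
  (l.map fun i => ExteriorAlgebra.ι R (Finsupp.single i 1)).prod

theorem basisWedge_perm {l l' : List ι} (h : l.Perm l') :
    basisWedge R l = basisWedge R l' ∨ basisWedge R l = -basisWedge R l' := by
  induction h with
  | nil => exact Or.inl rfl
  | cons a _ ih =>
    simp only [basisWedge, List.map_cons, List.prod_cons] at ih ⊢
    rcases ih with ih | ih <;> simp [ih]
  | swap a b l =>
    right
    simp only [basisWedge, List.map_cons, List.prod_cons, ← mul_assoc]
    rw [← neg_mul, eq_neg_of_add_eq_zero_left (ExteriorAlgebra.ι_add_mul_swap _ _)]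
  | trans _ _ h₁ h₂ => rcases h₁ with h₁ | h₁ <;> rcases h₂ with h₂ | h₂ <;> simp [h₁, h₂]

theorem basisWedge_cons_of_mem {a : ι} {l : List ι} (h : a ∈ l) : basisWedge R (a :: l) = 0 := by
  classical
  have hrep : basisWedge R (a :: a :: l.erase a) = 0 := by simp [basisWedge, ← mul_assoc]
  simpa [hrep] using basisWedge_perm (R := R) ((List.perm_cons_erase h).cons a)

/-- The bilinear form on the free module on `ι` with Gram matrix `M`. -/
noncomputable def gramForm (M : Matrix ι ι R) : LinearMap.BilinForm R (ι →₀ R) :=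
  Finsupp.linearCombination R fun i => Finsupp.linearCombination R fun j => M i j

@[simp]
theorem gramForm_single (M : Matrix ι ι R) (i j : ι) :
    gramForm M (Finsupp.single i 1) (Finsupp.single j 1) = M i j := by
  simp [gramForm]

theorem gramForm_isAlt {M : Matrix ι ι R} (hM : IsAlternating M) : (gramForm M).IsAlt := by
  have hskew : gramForm M = -(gramForm M).flip := by
    ext i j
    simpa using hM.skew i j
  intro u
  induction u using Finsupp.induction_linear with
  | zero => simp
  | add f g hf hg =>
    have hfg : gramForm M f g = -gramForm M g f := congr($hskew f g)
    simp only [map_add, LinearMap.add_apply, hf, hg, hfg]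
    ring
  | single i r => simp [gramForm, hM.diag]

-- Deforming the exterior algebra by `-M` and taking the scalar part turns left multiplication by a
-- basis vector into contraction with a row of `M`, that is, into the expansion along that row.
open CliffordAlgebra in
theorem exists_linearMap_basisWedge {M : Matrix ι ι R} (hM : IsAlternating M) :
    ∃ φ : ExteriorAlgebra R (ι →₀ R) →ₗ[R] R, ∀ l, φ (basisWedge R l) = listPfaffian M l := by
  have h : (-gramForm M).toQuadraticMap = (0 : QuadraticForm R (ι →₀ R)) - 0 := by
    ext u
    simp [gramForm_isAlt hM u]
  let scalar : ExteriorAlgebra R (ι →₀ R) →ₐ[R] R := lift 0 ⟨0, by simp⟩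
  have hscalar (m : ι →₀ R) : scalar (CliffordAlgebra.ι 0 m) = 0 := by simp [scalar]
  refine ⟨scalar.toLinearMap ∘ₗ changeForm h, fun l => ?_⟩
  induction l using listPfaffian.induct with
  | case1 => simp [basisWedge]
  | case2 a l ih =>
    rw [listPfaffian_cons, basisWedge, List.map_cons, List.prod_cons, LinearMap.comp_apply,
      ExteriorAlgebra.ι, changeForm_ι_mul, map_sub, ← changeForm_contractLeft,
      contractLeft_list_prod]
    simp only [AlgHom.toLinearMap_apply, map_mul, hscalar, zero_mul, zero_sub, map_sum, map_smul]
    rw [← Finset.sum_neg_distrib]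
    refine Finset.sum_congr rfl fun j _ => ?_
    rw [← ih j]
    simp [basisWedge, ExteriorAlgebra.ι]

section Alternating

variable {M : Matrix ι ι R} (hM : IsAlternating M)

include hM

theorem listPfaffian_perm {l l' : List ι} (h : l.Perm l') :
    listPfaffian M l = listPfaffian M l' ∨ listPfaffian M l = -listPfaffian M l' := by
  obtain ⟨φ, hφ⟩ := exists_linearMap_basisWedge hM
  simp only [← hφ, ← map_neg]
  exact (basisWedge_perm h).imp (congrArg φ) (congrArg φ)

theorem listPfaffian_cons_of_mem {a : ι} {l : List ι} (h : a ∈ l) :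
    listPfaffian M (a :: l) = 0 := by
  obtain ⟨φ, hφ⟩ := exists_linearMap_basisWedge hM
  rw [← hφ, basisWedge_cons_of_mem h, map_zero]

-- Expanding the factors `Pf (A[i] :: B)` and `Pf (B[j] :: A)` gives the same double sum up to sign.
theorem listPfaffian_plucker (A B : List ι) :
    ∑ i : Fin A.length, (-1) ^ (i : ℕ) * listPfaffian M (A.eraseIdx i) *
        listPfaffian M (A[i] :: B) =
      -∑ j : Fin B.length, (-1) ^ (j : ℕ) * listPfaffian M (B.eraseIdx j) *
        listPfaffian M (B[j] :: A) := by
  simp only [listPfaffian_cons, Finset.mul_sum, ← Finset.sum_neg_distrib]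
  rw [Finset.sum_comm]
  refine Finset.sum_congr rfl fun j _ => Finset.sum_congr rfl fun i _ => ?_
  rw [hM.skew A[i] B[j]]
  ring

-- Here and in the next relation most of the Plücker terms contain a Pfaffian with a repeated index.
theorem listPfaffian_plucker_four (a b c d : ι) (U : List ι) :
    listPfaffian M (a :: b :: c :: d :: U) * listPfaffian M U =
      -(listPfaffian M (c :: d :: U) * listPfaffian M (b :: a :: U)) +
        listPfaffian M (b :: d :: U) * listPfaffian M (c :: a :: U) -
        listPfaffian M (b :: c :: U) * listPfaffian M (d :: a :: U) := by
  have key := listPfaffian_plucker hM (a :: U) (b :: c :: d :: U)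
  simp only [List.length_cons, Fin.sum_univ_succ] at key
  rw [Finset.sum_eq_zero fun i _ => ?_,
    Finset.sum_eq_zero (s := Finset.univ (α := Fin U.length)) fun i _ => ?_] at key
  · simp only [Fin.val_succ, Fin.val_zero, List.eraseIdx_cons_succ, List.eraseIdx_cons_zero,
      List.getElem_cons_succ, List.getElem_cons_zero, Fin.getElem_fin] at key
    linear_combination key
  · rw [listPfaffian_cons_of_mem hM (l := a :: U) (by simp), mul_zero]
  · rw [listPfaffian_cons_of_mem hM (l := b :: c :: d :: U) (by simp), mul_zero]

theorem listPfaffian_plucker_five (a b c d e : ι) (U : List ι) :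
    listPfaffian M (c :: d :: U) * listPfaffian M (a :: b :: d :: e :: U) =
      listPfaffian M (a :: c :: d :: e :: U) * listPfaffian M (b :: d :: U) -
        listPfaffian M (b :: c :: d :: e :: U) * listPfaffian M (a :: d :: U) -
        listPfaffian M (e :: d :: U) * listPfaffian M (a :: b :: c :: d :: U) := by
  have key := listPfaffian_plucker hM (d :: U) (a :: b :: c :: d :: e :: U)
  simp only [List.length_cons, Fin.sum_univ_succ] at key
  rw [Finset.sum_eq_zero fun i _ => ?_,
    Finset.sum_eq_zero (s := Finset.univ (α := Fin U.length)) fun i _ => ?_] at key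
  · simp only [Fin.val_succ, Fin.val_zero, List.eraseIdx_cons_succ, List.eraseIdx_cons_zero,
      List.getElem_cons_succ, List.getElem_cons_zero, Fin.getElem_fin] at key
    rw [listPfaffian_cons_of_mem hM (a := d) (l := d :: U) (by simp),
      listPfaffian_cons_of_mem hM (a := d) (l := a :: b :: c :: d :: e :: U) (by simp)] at key
    linear_combination key
  · rw [listPfaffian_cons_of_mem hM (l := d :: U) (by simp), mul_zero]
  · rw [listPfaffian_cons_of_mem hM (l := a :: b :: c :: d :: e :: U) (by simp), mul_zero]

end Alternating

end Pfaffian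

section RegularSequence

variable {A : Type*} {n : ℕ}

theorem image_lt_castSucc (f : Fin (n + 1) → A) (i : Fin n) :
    f '' {j | j < i.castSucc} = Fin.init f '' {j | j < i} := by
  ext x
  simp [Fin.exists_fin_succ', Fin.init, i.castSucc_lt_last.not_gt]

theorem image_lt_last (f : Fin (n + 1) → A) :
    f '' {j | j < Fin.last n} = Set.range (Fin.init f) := by
  ext x
  simp [Fin.exists_fin_succ', Fin.init, Fin.castSucc_lt_last]

variable [CommRing A]

theorem isDSequence_of_isRegSeq_init {f : Fin (n + 1) → A} (hf : IsRegSeq (Fin.init f))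
    (hlast : ∀ r, r * f (Fin.last n) * f (Fin.last n) ∈ Ideal.span (Set.range (Fin.init f)) →
      r * f (Fin.last n) ∈ Ideal.span (Set.range (Fin.init f))) :
    IsDSequence f := by
  refine fun i => le_antisymm ?_ (le_inf ?_ (Ideal.span_mono (Set.image_subset_range _ _)))
  · rintro x ⟨hcolon, hx⟩
    replace hcolon := Ideal.mem_colon_span_singleton.mp hcolon
    induction i using Fin.lastCases with
    | cast i =>
      rw [image_lt_castSucc] at hcolon ⊢
      exact hf.1 i x hcolon
    | last =>
      rw [image_lt_last] at hcolon ⊢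
      rw [SetLike.mem_coe, ← Fin.snoc_init_self f, Fin.range_snoc, Ideal.span_insert] at hx
      obtain ⟨y, hy, z, hz, rfl⟩ := Submodule.mem_sup.mp hx
      obtain ⟨r, rfl⟩ := Ideal.mem_span_singleton'.mp hy
      refine add_mem (hlast r ?_) hz
      rw [add_mul] at hcolon
      exact (add_mem_cancel_right (Ideal.mul_mem_right _ _ hz)).mp hcolon
  · exact Ideal.le_colon

-- Multiplication by `p` embeds the quotient by `f` into the quotient by `f'`, where `h` is a
-- nonzerodivisor; it carries the annihilator of `h ^ 2` into that of `h`.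
theorem isDSequence_snoc_of_linked {f f' : Fin n → A} {p h : A}
    (hf : IsRegSeq f)
    (hp_reg : ∀ a, a * p ∈ Ideal.span (Set.range f) → a ∈ Ideal.span (Set.range f))
    (hh_reg : ∀ a, a * h ∈ Ideal.span (Set.range f') → a ∈ Ideal.span (Set.range f'))
    (hp : ∀ i, f i * p ∈ Ideal.span (Set.range f'))
    (hh : ∀ i, f' i * h ∈ Ideal.span (Set.range f)) :
    IsDSequence (Fin.snoc f h : Fin (n + 1) → A) := by
  have hpf : Ideal.span (Set.range f) ≤ (Ideal.span (Set.range f')).colon (Ideal.span {p}) := by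
    rw [Ideal.span_le, Set.range_subset_iff]
    exact fun i => Ideal.mem_colon_span_singleton.mpr (hp i)
  have hhf' : Ideal.span (Set.range f') ≤ (Ideal.span (Set.range f)).colon (Ideal.span {h}) := by
    rw [Ideal.span_le, Set.range_subset_iff]
    exact fun i => Ideal.mem_colon_span_singleton.mpr (hh i)
  refine isDSequence_of_isRegSeq_init (by simpa using hf) fun r hr => ?_
  simp only [Fin.init_snoc, Fin.snoc_last] at hr ⊢
  have hrp : r * p ∈ Ideal.span (Set.range f') := by
    have h₂ := Ideal.mem_colon_span_singleton.mp (hpf hr)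
    exact hh_reg _ (hh_reg _ (by convert h₂ using 1; ring))
  refine hp_reg _ ?_
  rw [mul_right_comm]
  exact Ideal.mem_colon_span_singleton.mp (hhf' hrp)

end RegularSequence

section DisjointLeadingMonomials

open MvPolynomial

theorem le_of_le_add_of_disjoint {σ : Type*} {s a d : σ →₀ ℕ} (h : s ≤ a + d)
    (hd : Disjoint s.support d.support) : s ≤ a := by
  intro i
  by_cases hi : s i = 0
  · simp [hi]
  · have hdi : d i = 0 := by
      simpa using Finset.disjoint_left.mp hd (Finsupp.mem_support_iff.mpr hi)
    simpa [hdi] using h i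

variable {σ ι R : Type*} [CommRing R] {m : MonomialOrder σ} {f : ι → MvPolynomial σ R}
  {s : Finset ι}

theorem exists_sub_mem_span_forall_not_degree_le (hu : ∀ i ∈ s, IsUnit (m.leadingCoeff (f i)))
    (a : MvPolynomial σ R) :
    ∃ r, a - r ∈ Ideal.span (f '' s) ∧ (r ≠ 0 → ∀ i ∈ s, ¬m.degree (f i) ≤ m.degree r) := by
  obtain ⟨g, r, ha, -, hr⟩ := m.div_set (B := f '' s) (by simpa using hu) a
  refine ⟨r, ?_, fun hr0 i hi => hr _ (m.degree_mem_support hr0) _ ⟨i, hi, rfl⟩⟩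
  rw [ha, add_sub_cancel_right]
  exact (Finsupp.mem_span_iff_linearCombination _ _ _).mpr ⟨g, rfl⟩

theorem exists_degree_le_of_mem_span (hu : ∀ i ∈ s, IsUnit (m.leadingCoeff (f i)))
    (hd : (s : Set ι).PairwiseDisjoint fun i => (m.degree (f i)).support)
    {h : MvPolynomial σ R} (hh : h ∈ Ideal.span (f '' s)) (h0 : h ≠ 0) :
    ∃ i ∈ s, m.degree (f i) ≤ m.degree h := by
  classical
  induction s using Finset.induction_on generalizing h with
  | empty => simp_all
  | insert i s his ih =>
    rw [Finset.coe_insert, Set.image_insert_eq, Ideal.span_insert] at hh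
    obtain ⟨b, hb, j, hj, rfl⟩ := Submodule.mem_sup.mp hh
    obtain ⟨a, rfl⟩ := Ideal.mem_span_singleton'.mp hb
    rw [Finset.forall_mem_insert] at hu
    rw [Finset.coe_insert, Set.pairwiseDisjoint_insert_of_notMem (by simpa using his)] at hd
    obtain ⟨r, hr, hr_le⟩ := exists_sub_mem_span_forall_not_degree_le hu.2 a
    obtain ⟨j', hj', hsum⟩ : ∃ j' ∈ Ideal.span (f '' s), a * f i + j = r * f i + j' :=
      ⟨(a - r) * f i + j, add_mem (Ideal.mul_mem_right _ _ hr) hj, by ring⟩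
    rw [hsum] at h0 ⊢
    have hdeg (hr0 : r ≠ 0) : m.degree (r * f i) = m.degree r + m.degree (f i) :=
      m.degree_mul_of_isRegular_right hr0 hu.1.isRegular
    by_cases hr0 : r = 0
    · simp only [hr0, zero_mul, zero_add] at h0 ⊢
      obtain ⟨k, hk, hle⟩ := ih hu.2 hd.1 hj' h0
      exact ⟨k, Finset.mem_insert_of_mem hk, hle⟩
    by_cases hj0 : j' = 0
    · exact ⟨i, Finset.mem_insert_self i s, by simp [hj0, hdeg hr0]⟩
    obtain ⟨k, hk, hle⟩ := ih hu.2 hd.1 hj' hj0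
    rcases lt_trichotomy (m.toSyn (m.degree j')) (m.toSyn (m.degree (r * f i))) with hlt | heq | hlt
    · exact ⟨i, Finset.mem_insert_self i s, by simp [m.degree_add_of_lt hlt, hdeg hr0]⟩
    · rw [m.toSyn.injective heq, hdeg hr0] at hle
      exact absurd (le_of_le_add_of_disjoint hle (hd.2 k hk).symm) (hr_le hr0 k hk)
    · exact ⟨k, Finset.mem_insert_of_mem hk, by rwa [m.degree_add_eq_right_of_lt hlt]⟩

theorem mem_span_of_mul_mem_span (hu : ∀ i ∈ s, IsUnit (m.leadingCoeff (f i)))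
    (hd : (s : Set ι).PairwiseDisjoint fun i => (m.degree (f i)).support)
    {p : MvPolynomial σ R} (hp : IsUnit (m.leadingCoeff p))
    (hdp : ∀ i ∈ s, Disjoint (m.degree p).support (m.degree (f i)).support)
    {a : MvPolynomial σ R} (ha : a * p ∈ Ideal.span (f '' s)) : a ∈ Ideal.span (f '' s) := by
  obtain ⟨r, hr, hr_le⟩ := exists_sub_mem_span_forall_not_degree_le hu a
  by_cases hr0 : r = 0
  · simpa [hr0] using hr
  have hrp : r * p ∈ Ideal.span (f '' s) := by
    have h := sub_mem ha (Ideal.mul_mem_right p _ hr)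
    rwa [← sub_mul, sub_sub_cancel] at h
  have hne : r * p ≠ 0 := by
    rw [← m.leadingCoeff_ne_zero_iff, m.leadingCoeff_mul_of_isRegular_right hp.isRegular]
    exact hp.mul_left_eq_zero.not.mpr (m.leadingCoeff_ne_zero_iff.mpr hr0)
  obtain ⟨i, hi, hle⟩ := exists_degree_le_of_mem_span hu hd hrp hne
  rw [m.degree_mul_of_isRegular_right hr0 hp.isRegular] at hle
  exact absurd (le_of_le_add_of_disjoint hle (hdp i hi).symm) (hr_le hr0 i hi)

theorem isRegSeq_of_pairwise_disjoint_degree_support [Nontrivial R] {n : ℕ}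
    {f : Fin n → MvPolynomial σ R} (hu : ∀ i, IsUnit (m.leadingCoeff (f i)))
    (h0 : ∀ i, m.degree (f i) ≠ 0)
    (hd : Pairwise fun i j => Disjoint (m.degree (f i)).support (m.degree (f j)).support) :
    IsRegSeq f := by
  refine ⟨fun i a ha => ?_, fun htop => ?_⟩
  · rw [Set.Iio_def, ← Finset.coe_Iio] at ha ⊢
    exact mem_span_of_mul_mem_span (fun j _ => hu j) (fun j _ k _ hjk => hd hjk) (hu i)
      (fun j hj => hd (Finset.mem_Iio.mp hj).ne') ha
  · rw [← Set.image_univ, ← Finset.coe_univ] at htop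
    obtain ⟨i, -, hi⟩ := exists_degree_le_of_mem_span (fun j _ => hu j)
      (fun j _ k _ hjk => hd hjk) (htop ▸ Submodule.mem_top (x := 1)) one_ne_zero
    exact h0 i (by simpa using hi)

end DisjointLeadingMonomials

section LexLeading

open MvPolynomial MonomialOrder

theorem exists_linearOrder_lt_of_lt {α β : Type*} [LinearOrder β] (key : α → β) :
    ∃ _ : LinearOrder α, ∀ a b, key a < key b → a < b := by
  classical
  let _ : LinearOrder α := linearOrderOfSTO WellOrderingRel
  refine ⟨LinearOrder.lift' (fun a => toLex (key a, a)) fun a b h => congr((ofLex $h).2),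
    fun a b h => ?_⟩
  exact Prod.Lex.toLex_lt_toLex.mpr (Or.inl h)

variable {σ R : Type*} [CommRing R] [LinearOrder σ] [WellFoundedGT σ] {e : σ}

theorem lex_degree_lt_single_of_mem_supported {r : MvPolynomial σ R}
    (hr : r ∈ supported R (Set.Ioi e)) : lex.degree r ≺[lex] Finsupp.single e 1 := by
  have hzero (s : σ) (hs : s ≤ e) : lex.degree r s = 0 := by
    by_contra hne
    have hr0 : r ≠ 0 := by
      rintro rfl
      simp at hne
    have hvars : s ∈ r.vars := (mem_vars_iff_mem_support s).mpr
      ⟨_, lex.degree_mem_support hr0, Finsupp.mem_support_iff.mpr hne⟩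
    exact hs.not_gt (mem_supported.mp hr hvars)
  rw [lex_lt_iff, Finsupp.Lex.lt_iff]
  exact ⟨e, fun s hs => by simp [hzero s hs.le, hs.ne'], by simp [hzero e le_rfl]⟩

theorem lex_degree_X_mul_add {f r : MvPolynomial σ R} (hf : f ≠ 0)
    (hr : r ∈ supported R (Set.Ioi e)) :
    lex.degree (X e * f + r) = Finsupp.single e 1 + lex.degree f := by
  have : Nontrivial R :=
    (subsingleton_or_nontrivial R).resolve_left fun _ => hf (Subsingleton.elim _ _)
  have hdeg : lex.degree (X e * f) = Finsupp.single e 1 + lex.degree f := by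
    rw [degree_mul_of_isRegular_left (by simp [isRegular_one]) hf, degree_X]
  rw [degree_add_of_lt, hdeg]
  rw [hdeg, map_add]
  exact (lex_degree_lt_single_of_mem_supported hr).trans_le (lex.le_add_right _ _)

end LexLeading

section Xmat

open MvPolynomial MonomialOrder

variable {K : Type} [Field K] {t : ℕ}

instance : Finite (PairVar t) := inferInstanceAs (Finite (Subtype _))

theorem PairVar.ext_sym2 {s s' : PairVar t} (h : s(s.1.1, s.1.2) = s(s'.1.1, s'.1.2)) :
    s = s' := by
  have hs := s.2.1
  have hs' := s'.2.1
  rcases Sym2.eq_iff.mp h with ⟨h₁, h₂⟩ | ⟨h₁, h₂⟩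
  · exact Subtype.ext (Prod.ext h₁ h₂)
  · rw [h₁, h₂] at hs
    omega

theorem Xmat_isAlternating : IsAlternating (Xmat K t) where
  diag i := by simp [Xmat]
  skew i j := by
    unfold Xmat
    split_ifs <;> first | omega | simp

theorem exists_Xmat_eq_X {a b : Fin t} (hab : a ≠ b) (h : 3 ≤ (a : ℕ) ∨ 3 ≤ (b : ℕ)) :
    ∃ s : PairVar t, s(s.1.1, s.1.2) = s(a, b) ∧ (Xmat K t a b = X s ∨ Xmat K t a b = -X s) := by
  rcases lt_or_gt_of_ne hab with hlt | hlt
  · have hs : (a : ℕ) < b ∧ 3 ≤ (b : ℕ) := by omega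
    exact ⟨⟨(a, b), hs⟩, rfl, Or.inl (dif_pos hs)⟩
  · have hs : (b : ℕ) < a ∧ 3 ≤ (a : ℕ) := by omega
    exact ⟨⟨(b, a), hs⟩, Sym2.eq_swap, Or.inr ((dif_neg (by omega)).trans (dif_pos hs))⟩

theorem Xmat_mem_supported {S : Set (PairVar t)} {a b : Fin t}
    (h : ∀ s : PairVar t, s(s.1.1, s.1.2) = s(a, b) → s ∈ S) : Xmat K t a b ∈ supported K S := by
  unfold Xmat
  split_ifs with hs hs
  · exact Algebra.subset_adjoin ⟨_, h _ rfl, rfl⟩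
  · exact neg_mem (Algebra.subset_adjoin ⟨_, h _ Sym2.eq_swap, rfl⟩)
  · exact zero_mem _

end Xmat

section Balanced

variable {t : ℕ}

/-- The weights `ω` balance the indices listed in `l` at `c`: each of them has exactly one partner
in `l` such that the two weights add up to `c`, and the entry of `Xmat` at such a pair is nonzero.
The resulting perfect matching of `l` will be the leading monomial of its Pfaffian. -/
structure IsBalanced (ω : Fin t → ℤ) (c : ℤ) (l : List (Fin t)) : Prop where
  nodup : l.Nodup
  exists_partner : ∀ a ∈ l, ∃ b ∈ l, b ≠ a ∧ ω a + ω b = c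
  partner_unique : ∀ a ∈ l, ∀ b ∈ l, ∀ b' ∈ l, b ≠ a → b' ≠ a →
    ω a + ω b = c → ω a + ω b' = c → b = b'
  three_le : ∀ a ∈ l, ∀ b ∈ l, a ≠ b → ω a + ω b = c → 3 ≤ (a : ℕ) ∨ 3 ≤ (b : ℕ)

namespace IsBalanced

variable {ω : Fin t → ℤ} {c : ℤ} {l l' : List (Fin t)} {a b x y : Fin t}

theorem perm (hl : IsBalanced ω c l) (h : l.Perm l') : IsBalanced ω c l' where
  nodup := h.nodup hl.nodup
  exists_partner := by simpa only [h.mem_iff] using hl.exists_partner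
  partner_unique := by simpa only [h.mem_iff] using hl.partner_unique
  three_le := by simpa only [h.mem_iff] using hl.three_le

theorem sym2_eq_or_mem (hl : IsBalanced ω c (a :: b :: l)) (hab : ω a + ω b = c)
    (hx : x ∈ a :: b :: l) (hy : y ∈ a :: b :: l) (hxy : x ≠ y) (hc : ω x + ω y = c) :
    s(x, y) = s(a, b) ∨ x ∈ l ∧ y ∈ l := by
  have hne : a ≠ b := by
    rintro rfl
    simpa using hl.nodup
  have hb (z) (hz : z ∈ a :: b :: l) (hza : z ≠ a) (h : ω a + ω z = c) : z = b :=
    hl.partner_unique a (by simp) z hz b (by simp) hza hne.symm h hab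
  have ha (z) (hz : z ∈ a :: b :: l) (hzb : z ≠ b) (h : ω b + ω z = c) : z = a :=
    hl.partner_unique b (by simp) z hz a (by simp) hzb hne h (by rw [add_comm, hab])
  by_cases hxa : x = a
  · subst hxa; exact Or.inl (by rw [hb y hy hxy.symm hc])
  by_cases hxb : x = b
  · subst hxb; exact Or.inl (by rw [ha y hy hxy.symm hc, Sym2.eq_swap])
  by_cases hya : y = a
  · subst hya; exact absurd (hb x hx hxy (by rw [add_comm, hc])) hxb
  by_cases hyb : y = b
  · subst hyb; exact absurd (ha x hx hxy (by rw [add_comm, hc])) hxa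
  exact Or.inr ⟨by simpa [hxa, hxb] using hx, by simpa [hya, hyb] using hy⟩

theorem of_cons_cons (hl : IsBalanced ω c (a :: b :: l)) (hab : ω a + ω b = c) :
    IsBalanced ω c l := by
  have hsub {x} (hx : x ∈ l) : x ∈ a :: b :: l := by simp [hx]
  refine ⟨hl.nodup.of_cons.of_cons, fun x hx => ?_,
    fun x hx y hy y' hy' => hl.partner_unique x (hsub hx) y (hsub hy) y' (hsub hy'),
    fun x hx y hy => hl.three_le x (hsub hx) y (hsub hy)⟩
  obtain ⟨y, hy, hyx, hc⟩ := hl.exists_partner x (hsub hx)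
  rcases hl.sym2_eq_or_mem hab (hsub hx) hy hyx.symm hc with h | ⟨-, hyl⟩
  · have hnodup := hl.nodup
    rcases Sym2.eq_iff.mp h with ⟨rfl, rfl⟩ | ⟨rfl, rfl⟩ <;> simp_all
  · exact ⟨y, hyl, hyx, hc⟩

-- The pair consists of an index of least weight and its partner, which has largest weight.
theorem exists_perm_cons_cons (hl : IsBalanced ω c l) (h0 : l ≠ []) :
    ∃ a b rest, l.Perm (a :: b :: rest) ∧ ω a + ω b = c ∧
      ∀ x ∈ l, ∀ y ∈ l, x ≠ y → |ω a - ω b| ≤ |ω x - ω y| → s(x, y) = s(a, b) := by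
  obtain ⟨a, ha, hmin⟩ : ∃ a ∈ l, ∀ x ∈ l, ω a ≤ ω x := by
    simpa using l.toFinset.exists_min_image ω (by simpa using h0)
  obtain ⟨b, hb, hba, hab⟩ := hl.exists_partner a ha
  have hmax (x) (hx : x ∈ l) : ω x ≤ ω b := by
    obtain ⟨y, hy, -, hc⟩ := hl.exists_partner x hx
    linarith [hmin y hy]
  refine ⟨a, b, (l.erase a).erase b, ?_, hab, fun x hx y hy hxy hle => ?_⟩
  · exact (List.perm_cons_erase ha).trans
      ((List.perm_cons_erase ((List.mem_erase_of_ne hba).mpr hb)).cons a)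
  wlog hlt : ω x ≤ ω y generalizing x y
  · rw [Sym2.eq_swap]
    exact this y hy x hx hxy.symm (by rwa [abs_sub_comm (ω y)]) (le_of_not_ge hlt)
  rw [abs_sub_comm, abs_sub_comm (ω x), abs_of_nonneg (sub_nonneg.mpr (hmin b hb)),
    abs_of_nonneg (sub_nonneg.mpr hlt)] at hle
  have hxa : ω x = ω a := by linarith [hmin x hx, hmax y hy]
  have hyb : ω y = ω b := by linarith [hmin x hx, hmax y hy]
  by_cases hya : y = a
  · subst hya
    rw [hl.partner_unique y hy x hx b hb hxy hba (by linarith) hab, Sym2.eq_swap]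
  have hy' : y = b := hl.partner_unique a ha y hy b hb hya hba (by linarith) hab
  subst hy'
  rw [hl.partner_unique y hy x hx a ha hxy hba.symm (by linarith) (by linarith)]

end IsBalanced

section LeadingMonomial

open MvPolynomial MonomialOrder

variable {K : Type} [Field K] {ω : Fin t → ℤ} {c : ℤ} {l : List (Fin t)}

theorem lex_degree_listPfaffian_cons_cons [LinearOrder (PairVar t)] {a b : Fin t} {e : PairVar t}
    (hX : Xmat K t a b = X e ∨ Xmat K t a b = -X e)
    (ha : ∀ x ∈ l, Xmat K t a x ∈ supported K (Set.Ioi e))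
    (hl : ∀ x ∈ b :: l, ∀ y ∈ b :: l, Xmat K t x y ∈ supported K (Set.Ioi e))
    (h0 : listPfaffian (Xmat K t) l ≠ 0) :
    lex.degree (listPfaffian (Xmat K t) (a :: b :: l)) =
      Finsupp.single e 1 + lex.degree (listPfaffian (Xmat K t) l) := by
  have hr := listPfaffian_cons_cons_sub_mem (supported K (Set.Ioi e)) ha hl
  generalize listPfaffian (Xmat K t) (a :: b :: l) = F at hr ⊢
  rw [← add_sub_cancel (Xmat K t a b * listPfaffian (Xmat K t) l) F]
  rcases hX with hX | hX
  · rw [hX, lex_degree_X_mul_add h0 (by rwa [← hX])]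
  · rw [hX, neg_mul_comm, lex_degree_X_mul_add (neg_ne_zero.mpr h0) (by rwa [← neg_mul_comm, ← hX]),
      degree_neg]

theorem abs_sub_eq_of_sym2_eq {a b x y : Fin t} (h : s(a, b) = s(x, y)) :
    |ω a - ω b| = |ω x - ω y| := by
  rcases Sym2.eq_iff.mp h with ⟨rfl, rfl⟩ | ⟨rfl, rfl⟩
  · rfl
  · exact abs_sub_comm _ _

theorem IsBalanced.exists_lex_degree_listPfaffian_cons_cons [LinearOrder (PairVar t)] {a b : Fin t}
    (hlt : ∀ s s' : PairVar t, |ω s'.1.1 - ω s'.1.2| < |ω s.1.1 - ω s.1.2| → s < s')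
    (hl : IsBalanced ω c (a :: b :: l)) (hab : ω a + ω b = c)
    (hmax : ∀ x ∈ a :: b :: l, ∀ y ∈ a :: b :: l, x ≠ y → |ω a - ω b| ≤ |ω x - ω y| →
      s(x, y) = s(a, b))
    (h0 : listPfaffian (Xmat K t) l ≠ 0) :
    ∃ e : PairVar t, s(e.1.1, e.1.2) = s(a, b) ∧
      lex.degree (listPfaffian (Xmat K t) (a :: b :: l)) =
        Finsupp.single e 1 + lex.degree (listPfaffian (Xmat K t) l) := by
  obtain ⟨hne, ha, hb, -⟩ : a ≠ b ∧ a ∉ l ∧ b ∉ l ∧ l.Nodup := by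
    simpa [not_or, and_assoc] using hl.nodup
  obtain ⟨e, he, hX⟩ := exists_Xmat_eq_X (K := K) hne
    (hl.three_le a (by simp) b (by simp) hne hab)
  have hmem {x y : Fin t} (hx : x ∈ a :: b :: l) (hy : y ∈ a :: b :: l) (hxy : s(x, y) ≠ s(a, b)) :
      Xmat K t x y ∈ supported K (Set.Ioi e) := by
    refine Xmat_mem_supported fun s hs => hlt e s (not_le.mp fun hle => hxy ?_)
    rw [abs_sub_eq_of_sym2_eq he, abs_sub_eq_of_sym2_eq hs] at hle
    refine hmax x hx y hy (fun h => ?_) hle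
    have hs12 := s.2.1
    subst h
    rcases Sym2.eq_iff.mp hs with ⟨h₁, h₂⟩ | ⟨h₁, h₂⟩ <;> simp [h₁, h₂] at hs12
  refine ⟨e, he, lex_degree_listPfaffian_cons_cons hX (fun x hx => ?_) (fun x hx y hy => ?_) h0⟩
  · exact hmem (by simp) (by simp [hx]) (by simpa [hne] using ne_of_mem_of_not_mem hx hb)
  · have hax : x ≠ a := fun h => by simp_all
    have hay : y ≠ a := fun h => by simp_all
    exact hmem (List.mem_cons_of_mem _ hx) (List.mem_cons_of_mem _ hy) (by simp [hax, hay])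

theorem IsBalanced.lex_degree_listPfaffian [LinearOrder (PairVar t)]
    (hlt : ∀ s s' : PairVar t, |ω s'.1.1 - ω s'.1.2| < |ω s.1.1 - ω s.1.2| → s < s')
    (hl : IsBalanced ω c l) :
    listPfaffian (Xmat K t) l ≠ 0 ∧ ∀ s, s ∈ (lex.degree (listPfaffian (Xmat K t) l)).support ↔
      s.1.1 ∈ l ∧ s.1.2 ∈ l ∧ ω s.1.1 + ω s.1.2 = c := by
  classical
  induction hn : l.length using Nat.strong_induction_on generalizing l with
  | _ n ih =>
  rcases eq_or_ne l [] with rfl | hne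
  · simp
  obtain ⟨a, b, rest, hperm, hab, hmax⟩ := hl.exists_perm_cons_cons hne
  simp only [hperm.mem_iff] at hmax ⊢
  replace hl := hl.perm hperm
  obtain ⟨h0, hsupp⟩ := ih rest.length (by simp [← hn, hperm.length_eq]) (hl.of_cons_cons hab) rfl
  obtain ⟨e, he, hdeg⟩ := hl.exists_lex_degree_listPfaffian_cons_cons (K := K) hlt hab hmax h0
  have hperm_deg : lex.degree (listPfaffian (Xmat K t) l) =
      lex.degree (listPfaffian (Xmat K t) (a :: b :: rest)) := by
    rcases listPfaffian_perm (Xmat_isAlternating (K := K)) hperm with h | h <;> simp [h]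
  rw [hdeg] at hperm_deg
  refine ⟨lex.ne_zero_of_degree_ne_zero fun h => ?_, fun s => ?_⟩
  · simpa using congr($(hperm_deg.symm.trans h) e)
  have hmem_support : s ∈ (lex.degree (listPfaffian (Xmat K t) l)).support ↔
      s = e ∨ s ∈ (lex.degree (listPfaffian (Xmat K t) rest)).support := by
    rw [hperm_deg]
    rcases eq_or_ne s e with rfl | h
    · simp
    · simp [h]
  rw [hmem_support, hsupp]
  constructor
  · rintro (rfl | ⟨h₁, h₂, hc⟩)
    · rcases Sym2.eq_iff.mp he with ⟨h₁, h₂⟩ | ⟨h₁, h₂⟩ <;> simp [h₁, h₂, hab, add_comm]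
    · simp [h₁, h₂, hc]
  · rintro ⟨h₁, h₂, hc⟩
    have hs12 : s.1.1 ≠ s.1.2 := fun h => s.2.1.ne congr(($h : ℕ))
    exact (hl.sym2_eq_or_mem hab h₁ h₂ hs12 hc).imp
      (fun h => PairVar.ext_sym2 (h.trans he.symm)) fun h => ⟨h.1, h.2, hc⟩

theorem IsBalanced.exists_pairVar (hl : IsBalanced ω c l) (hne : l ≠ []) :
    ∃ s : PairVar t, s.1.1 ∈ l ∧ s.1.2 ∈ l ∧ ω s.1.1 + ω s.1.2 = c := by
  obtain ⟨a, ha⟩ := List.exists_mem_of_ne_nil l hne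
  obtain ⟨b, hb, hba, hab⟩ := hl.exists_partner a ha
  obtain ⟨s, hs, -⟩ := exists_Xmat_eq_X (K := ℚ) hba.symm (hl.three_le a ha b hb hba.symm hab)
  rcases Sym2.eq_iff.mp hs with ⟨h₁, h₂⟩ | ⟨h₁, h₂⟩ <;>
    exact ⟨s, by simp [h₁, h₂, ha, hb, hab, add_comm]⟩

theorem exists_monomialOrder_listPfaffian (K : Type) [Field K] (ω : Fin t → ℤ) :
    ∃ m : MonomialOrder.{0, 0} (PairVar t),
      (∀ c l, IsBalanced ω c l → IsUnit (m.leadingCoeff (listPfaffian (Xmat K t) l)) ∧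
        (l ≠ [] → m.degree (listPfaffian (Xmat K t) l) ≠ 0)) ∧
      ∀ c c' l l', IsBalanced ω c l → IsBalanced ω c' l' → c ≠ c' →
        Disjoint (m.degree (listPfaffian (Xmat K t) l)).support
          (m.degree (listPfaffian (Xmat K t) l')).support := by
  obtain ⟨_, hlt⟩ := exists_linearOrder_lt_of_lt
    fun s : PairVar t => OrderDual.toDual |ω s.1.1 - ω s.1.2|
  have hdeg {c l} (hl : IsBalanced ω c l) := hl.lex_degree_listPfaffian (K := K) hlt
  refine ⟨lex, fun c l hl => ⟨?_, fun hne h0 => ?_⟩, fun c c' l l' hl hl' hcc' => ?_⟩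
  · exact (lex.leadingCoeff_ne_zero_iff.mpr (hdeg hl).1).isUnit
  · obtain ⟨s, hs⟩ := hl.exists_pairVar hne
    simpa [h0] using ((hdeg hl).2 s).mpr hs
  · refine Finset.disjoint_left.mpr fun s hs hs' => hcc' ?_
    rw [← (((hdeg hl).2 s).mp hs).2.2, (((hdeg hl').2 s).mp hs').2.2]

theorem isRegSeq_listPfaffian {n : ℕ} {l : Fin n → List (Fin t)} {c : Fin n → ℤ}
    (hl : ∀ i, IsBalanced ω (c i) (l i)) (hc : Function.Injective c) (hne : ∀ i, l i ≠ []) :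
    IsRegSeq fun i => listPfaffian (Xmat K t) (l i) := by
  obtain ⟨m, hm, hdisj⟩ := exists_monomialOrder_listPfaffian K ω
  exact isRegSeq_of_pairwise_disjoint_degree_support (m := m) (fun i => (hm _ _ (hl i)).1)
    (fun i => (hm _ _ (hl i)).2 (hne i)) fun i j hij => hdisj _ _ _ _ (hl i) (hl j) (hc.ne hij)

theorem mem_span_of_mul_listPfaffian_mem_span {ι : Type*} [Finite ι] {l : ι → List (Fin t)}
    {c : ι → ℤ} (hl : ∀ i, IsBalanced ω (c i) (l i)) (hc : Function.Injective c)
    {c₀ : ℤ} {l₀ : List (Fin t)} (hl₀ : IsBalanced ω c₀ l₀) (hc₀ : ∀ i, c₀ ≠ c i)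
    {a : MvPolynomial (PairVar t) K} (ha : a * listPfaffian (Xmat K t) l₀ ∈
      Ideal.span (Set.range fun i => listPfaffian (Xmat K t) (l i))) :
    a ∈ Ideal.span (Set.range fun i => listPfaffian (Xmat K t) (l i)) := by
  cases nonempty_fintype ι
  obtain ⟨m, hm, hdisj⟩ := exists_monomialOrder_listPfaffian K ω
  rw [← Set.image_univ, ← Finset.coe_univ] at ha ⊢
  exact mem_span_of_mul_mem_span (m := m) (fun i _ => (hm _ _ (hl i)).1)
    (fun i _ j _ hij => hdisj _ _ _ _ (hl i) (hl j) (hc.ne hij)) (hm _ _ hl₀).1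
    (fun i _ => hdisj _ _ _ _ hl₀ (hl i) (hc₀ i)) ha

end LeadingMonomial

end Balanced

section Weights

theorem IsBalanced.of_bijOn_Icc {t : ℕ} {ω : Fin t → ℤ} {S : Set (Fin t)} {A B lo hi c : ℤ}
    {l : List (Fin t)} (hω : S.BijOn ω (Set.Icc A B)) (hlo : A ≤ lo) (hhi : hi ≤ B)
    (hc : lo + hi = c) (hn : l.Nodup)
    (hl : ∀ i, i ∈ l ↔ i ∈ S ∧ lo ≤ ω i ∧ ω i ≤ hi ∧ 2 * ω i ≠ c)
    (h3 : ∀ a ∈ l, ∀ b ∈ l, a ≠ b → ω a + ω b = c → 3 ≤ (a : ℕ) ∨ 3 ≤ (b : ℕ)) :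
    IsBalanced ω c l where
  nodup := hn
  exists_partner a ha := by
    obtain ⟨-, h₁, h₂, h₃⟩ := (hl a).mp ha
    obtain ⟨b, hbS, hb⟩ := hω.surjOn (a := c - ω a) ⟨by linarith, by linarith⟩
    refine ⟨b, (hl b).mpr ⟨hbS, by omega⟩, fun h => h₃ ?_, by linarith⟩
    rw [h] at hb
    linarith
  partner_unique a _ b hb b' hb' _ _ h h' :=
    hω.injOn ((hl b).mp hb).1 ((hl b').mp hb').1 (by linarith)
  three_le := h3

variable {q : ℕ}

/-- The weights `w₀`, `w₁`, `w₂` on the indices `0`, `1`, `2`, followed by `0`, `q + 1` and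
`-q, …, -1, 1, …, q`. The indices `≥ 3` thus bear every weight from `-q` to `q + 1` once. -/
def weight (q : ℕ) (w₀ w₁ w₂ : ℤ) (i : Fin (2 * q + 5)) : ℤ :=
  if (i : ℕ) = 0 then w₀ else if (i : ℕ) = 1 then w₁ else if (i : ℕ) = 2 then w₂
  else if (i : ℕ) = 3 then 0 else if (i : ℕ) = 4 then q + 1
  else if (i : ℕ) < q + 5 then i - 5 - q else i - 4 - q

theorem weight_cases (q : ℕ) (w₀ w₁ w₂ : ℤ) (i : Fin (2 * q + 5)) :
    (i : ℕ) = 0 ∧ weight q w₀ w₁ w₂ i = w₀ ∨ (i : ℕ) = 1 ∧ weight q w₀ w₁ w₂ i = w₁ ∨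
    (i : ℕ) = 2 ∧ weight q w₀ w₁ w₂ i = w₂ ∨ (i : ℕ) = 3 ∧ weight q w₀ w₁ w₂ i = 0 ∨
    (i : ℕ) = 4 ∧ weight q w₀ w₁ w₂ i = q + 1 ∨
    (5 ≤ (i : ℕ) ∧ weight q w₀ w₁ w₂ i = i - 5 - q ∧ weight q w₀ w₁ w₂ i < 0) ∨
    (5 ≤ (i : ℕ) ∧ weight q w₀ w₁ w₂ i = i - 4 - q ∧ 0 < weight q w₀ w₁ w₂ i) := by
  unfold weight
  split_ifs <;> omega

theorem exists_weight_eq (w₀ w₁ w₂ : ℤ) {j : ℤ} (hlo : -q ≤ j) (hhi : j ≤ q + 1) :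
    ∃ i : Fin (2 * q + 5), 3 ≤ (i : ℕ) ∧ weight q w₀ w₁ w₂ i = j := by
  rcases lt_trichotomy j 0 with hj | rfl | hj
  · refine ⟨⟨(j + 5 + q).toNat, by omega⟩, ?_⟩
    have := weight_cases q w₀ w₁ w₂ ⟨(j + 5 + q).toNat, by omega⟩
    dsimp only at this ⊢
    omega
  · exact ⟨⟨3, by omega⟩, le_rfl, rfl⟩
  obtain rfl | hj' := hhi.eq_or_lt
  · exact ⟨⟨4, by omega⟩, by simp, rfl⟩
  · refine ⟨⟨(j + 4 + q).toNat, by omega⟩, ?_⟩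
    have := weight_cases q w₀ w₁ w₂ ⟨(j + 4 + q).toNat, by omega⟩
    dsimp only at this ⊢
    omega

theorem bijOn_weight_ne_zero (q : ℕ) (w₀ : ℤ) :
    Set.BijOn (weight q w₀ (q + 3) (q + 2)) {i | (i : ℕ) ≠ 0} (Set.Icc (-q) (q + 3)) := by
  have hcases := weight_cases q w₀ (q + 3) (q + 2)
  refine ⟨fun i (hi : (i : ℕ) ≠ 0) => ?_, fun i (hi : (i : ℕ) ≠ 0) i' (hi' : (i' : ℕ) ≠ 0) h => ?_,
    fun j ⟨hlo, hhi⟩ => ?_⟩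
  · have := hcases i
    have := i.2
    constructor <;> omega
  · have := hcases i
    have := hcases i'
    omega
  · obtain rfl | rfl | hj : j = q + 3 ∨ j = q + 2 ∨ j ≤ q + 1 := by omega
    · exact ⟨⟨1, by omega⟩, one_ne_zero, rfl⟩
    · exact ⟨⟨2, by omega⟩, two_ne_zero, rfl⟩
    · obtain ⟨i, hi, rfl⟩ := exists_weight_eq w₀ (q + 3) (q + 2) hlo hj
      exact ⟨i, fun h : (i : ℕ) = 0 => by omega, rfl⟩

theorem bijOn_weight_univ (q : ℕ) :
    Set.BijOn (weight q (q + 2) (q + 3) (-(q + 1))) Set.univ (Set.Icc (-(q + 1)) (q + 3)) := by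
  have hcases := weight_cases q (q + 2) (q + 3) (-(q + 1))
  refine ⟨fun i _ => ?_, fun i _ i' _ h => ?_, fun j ⟨hlo, hhi⟩ => ?_⟩
  · have := hcases i
    have := i.2
    constructor <;> omega
  · have := hcases i
    have := hcases i'
    omega
  · obtain rfl | rfl | rfl | ⟨hlo, hhi⟩ : j = q + 2 ∨ j = q + 3 ∨ j = -(q + 1) ∨
        -q ≤ j ∧ j ≤ q + 1 := by omega
    · exact ⟨0, trivial, rfl⟩
    · exact ⟨1, trivial, rfl⟩
    · exact ⟨2, trivial, rfl⟩
    · obtain ⟨i, -, rfl⟩ := exists_weight_eq (q + 2) (q + 3) (-(q + 1)) hlo hhi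
      exact ⟨i, trivial, rfl⟩

variable {l : List (Fin (2 * q + 5))} {lo hi c : ℤ}

theorem isBalanced_weight_of_mem_iff_ne_zero (hn : l.Nodup) (hl : ∀ i, i ∈ l ↔ (i : ℕ) ≠ 0 ∧
      lo ≤ weight q 1 (q + 3) (q + 2) i ∧ weight q 1 (q + 3) (q + 2) i ≤ hi ∧
      2 * weight q 1 (q + 3) (q + 2) i ≠ c)
    (hlo : -q ≤ lo := by omega) (hhi : hi ≤ q + 3 := by omega) (hc : lo + hi = c := by omega)
    (hc3 : c ≤ 3 := by omega) : IsBalanced (weight q 1 (q + 3) (q + 2)) c l := by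
  refine .of_bijOn_Icc (bijOn_weight_ne_zero q 1) hlo hhi hc hn hl fun a ha b hb hab h => ?_
  have := weight_cases q 1 (q + 3) (q + 2) a
  have := weight_cases q 1 (q + 3) (q + 2) b
  rw [hl] at ha hb
  omega

theorem isBalanced_weight_of_mem_iff (hn : l.Nodup) (hl : ∀ i, i ∈ l ↔
      lo ≤ weight q (q + 2) (q + 3) (-(q + 1)) i ∧ weight q (q + 2) (q + 3) (-(q + 1)) i ≤ hi ∧
      2 * weight q (q + 2) (q + 3) (-(q + 1)) i ≠ c)
    (hlo : -(q + 1) ≤ lo := by omega) (hhi : hi ≤ q + 3 := by omega)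
    (hc : lo + hi = c := by omega) (h3 : lo = -q ∨ hi ≤ q + 1 := by omega) :
    IsBalanced (weight q (q + 2) (q + 3) (-(q + 1))) c l := by
  refine .of_bijOn_Icc (bijOn_weight_univ q) hlo hhi hc hn (by simpa using hl)
    fun a ha b hb hab h => ?_
  have := weight_cases q (q + 2) (q + 3) (-(q + 1)) a
  have := weight_cases q (q + 2) (q + 3) (-(q + 1)) b
  rw [hl] at ha hb
  omega

-- The weight `1` is borne twice, by `0` and by a later index, and these two are partners.
theorem isBalanced_weight_of_mem_iff_ne_one (hn : l.Nodup) (hl : ∀ i, i ∈ l ↔ (i : ℕ) ≠ 1) :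
    IsBalanced (weight q 1 (q + 3) (q + 2)) 2 l := by
  have hcases := weight_cases q 1 (q + 3) (q + 2)
  refine ⟨hn, fun a ha => ?_, fun a ha b hb b' hb' hba hba' h h' => ?_, fun a ha b hb hab h => ?_⟩
  · rw [hl] at ha
    have hcases_a := hcases a
    have := a.2
    by_cases h0 : weight q 1 (q + 3) (q + 2) a = 1 ∧ (a : ℕ) ≠ 0
    · exact ⟨⟨0, by omega⟩, by simp [hl], fun h => h0.2 (by simp [← h]), by rw [h0.1]; rfl⟩
    by_cases h2 : weight q 1 (q + 3) (q + 2) a = -q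
    · refine ⟨⟨2, by omega⟩, by simp [hl], fun h => ?_, by rw [h2]; exact neg_add_cancel_left _ 2⟩
      rw [← h] at h2
      exact absurd (show (q + 2 : ℤ) = -q from h2) (by omega)
    · obtain ⟨b, hb, hab⟩ := exists_weight_eq (q := q) 1 (q + 3) (q + 2)
        (j := 2 - weight q 1 (q + 3) (q + 2) a) (by omega) (by omega)
      refine ⟨b, (hl b).mpr (by omega), fun h => ?_, by linarith⟩
      subst h
      omega
  · rw [hl] at ha hb hb'
    have := hcases a
    have := hcases b
    have := hcases b'
    omega
  · rw [hl] at ha hb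
    have := hcases a
    have := hcases b
    omega

end Weights

section Indices

/-- The indices in `s` followed by all indices `≥ 5`. -/
def indices (q : ℕ) (s : List (Fin 5)) : List (Fin (2 * q + 5)) :=
  s.map (Fin.castLE (by omega)) ++ List.ofFn fun k : Fin (2 * q) => k.addNat 5

variable {q : ℕ} {s : List (Fin 5)}

theorem mem_indices_cons {a : Fin 5} {i : Fin (2 * q + 5)} :
    i ∈ indices q (a :: s) ↔ (i : ℕ) = a ∨ i ∈ indices q s := by
  simp [indices, Fin.ext_iff]

theorem mem_indices_nil {i : Fin (2 * q + 5)} : i ∈ indices q [] ↔ 5 ≤ (i : ℕ) := by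
  refine List.mem_ofFn.trans ⟨?_, fun h => ⟨⟨i - 5, by omega⟩, ?_⟩⟩
  · rintro ⟨k, rfl⟩
    simp
  · ext
    simp [h]

theorem nodup_indices (hs : s.Nodup) : (indices q s).Nodup := by
  refine List.Nodup.append (hs.map (Fin.castLE_injective _)) (List.nodup_ofFn.mpr ?_) ?_
  · exact fun i j h => by simpa [Fin.ext_iff] using h
  · intro i hi hi'
    obtain ⟨a, -, rfl⟩ := List.mem_map.mp hi
    obtain ⟨k, hk⟩ := List.mem_ofFn.mp hi'
    have : (k : ℕ) + 5 = a := congrArg Fin.val hk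
    omega

theorem indices_ne_nil (hs : s ≠ []) : indices q s ≠ [] := by
  simp [indices, hs]

/-- The indices below `5` in the Pfaffians `Pf_{123̄}`, `Pf_{1̄}`, `Pf_{2̄}`, which form the regular
sequence; indices are counted from `0`. -/
def regularIndices : Fin 3 → List (Fin 5) := ![[3, 4], [1, 2, 3, 4], [0, 2, 3, 4]]

/-- The indices below `5` in the Pfaffians of the linked sequence, modulo which `Pf_{3̄}` is a
nonzerodivisor; it plays the role of `f'` in `isDSequence_snoc_of_linked`. -/
def linkedIndices : Fin 3 → List (Fin 5) := ![[3, 4], [2, 3], [2, 4]]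

-- The weights on this list are `-q, …, q` without `0`; on the lists of the next lemma they are
-- `-q, …, q + 1`, then `-q, …, q + 3`, then `-q, …, q + 2` with `1` repeated.
theorem isBalanced_indices_nil (q : ℕ) :
    IsBalanced (weight q 1 (q + 3) (q + 2)) 0 (indices q []) := by
  refine isBalanced_weight_of_mem_iff_ne_zero (lo := -q) (hi := q)
    (nodup_indices (by decide)) fun i => ?_
  have := weight_cases q 1 (q + 3) (q + 2) i
  have := i.2
  rw [mem_indices_nil]
  omega

theorem isBalanced_indices_regularIndices (q : ℕ) (i : Fin 3) :
    IsBalanced (weight q 1 (q + 3) (q + 2)) (![1, 3, 2] i)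
      (indices q (regularIndices i)) := by
  have hcases := weight_cases q 1 (q + 3) (q + 2)
  fin_cases i
  · change IsBalanced _ 1 (indices q [3, 4])
    refine isBalanced_weight_of_mem_iff_ne_zero (lo := -q) (hi := q + 1)
      (nodup_indices (by decide)) fun i => ?_
    have := hcases i
    have := i.2
    simp only [mem_indices_cons, mem_indices_nil]
    omega
  · change IsBalanced _ 3 (indices q [1, 2, 3, 4])
    refine isBalanced_weight_of_mem_iff_ne_zero (lo := -q) (hi := q + 3)
      (nodup_indices (by decide)) fun i => ?_
    have := hcases i
    have := i.2
    simp only [mem_indices_cons, mem_indices_nil]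
    omega
  · change IsBalanced _ 2 (indices q [0, 2, 3, 4])
    refine isBalanced_weight_of_mem_iff_ne_one (nodup_indices (by decide)) fun i => ?_
    simp only [mem_indices_cons, mem_indices_nil]
    omega

theorem isBalanced_indices_linkedIndices (q : ℕ) (i : Fin 3) :
    IsBalanced (weight q (q + 2) (q + 3) (-(q + 1))) (![1, -1, 0] i)
      (indices q (linkedIndices i)) := by
  have hcases := weight_cases q (q + 2) (q + 3) (-(q + 1))
  fin_cases i
  · change IsBalanced _ 1 (indices q [3, 4])
    refine isBalanced_weight_of_mem_iff (lo := -q) (hi := q + 1)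
      (nodup_indices (by decide)) fun i => ?_
    have := hcases i
    have := i.2
    simp only [mem_indices_cons, mem_indices_nil]
    omega
  · change IsBalanced _ (-1) (indices q [2, 3])
    refine isBalanced_weight_of_mem_iff (lo := -(q + 1)) (hi := q)
      (nodup_indices (by decide)) fun i => ?_
    have := hcases i
    have := i.2
    simp only [mem_indices_cons, mem_indices_nil]
    omega
  · change IsBalanced _ 0 (indices q [2, 4])
    refine isBalanced_weight_of_mem_iff (lo := -(q + 1)) (hi := q + 1)
      (nodup_indices (by decide)) fun i => ?_
    have := hcases i
    have := i.2
    simp only [mem_indices_cons, mem_indices_nil]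
    omega

theorem isBalanced_indices_zero_one_three_four (q : ℕ) :
    IsBalanced (weight q (q + 2) (q + 3) (-(q + 1))) 3 (indices q [0, 1, 3, 4]) := by
  refine isBalanced_weight_of_mem_iff (lo := -q) (hi := q + 3)
    (nodup_indices (by decide)) fun i => ?_
  have := weight_cases q (q + 2) (q + 3) (-(q + 1)) i
  have := i.2
  simp only [mem_indices_cons, mem_indices_nil]
  omega

end Indices

section SubPfaffian

variable {K : Type} [Field K] {q : ℕ} {s s' : List (Fin 5)}
  {I : Ideal (MvPolynomial (PairVar (2 * q + 5)) K)}

variable (K q s) in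
/-- The Pfaffian of the submatrix of `Xmat` on the indices in `s`, in this order, and all
indices `≥ 5`. -/
noncomputable def subPfaffian : MvPolynomial (PairVar (2 * q + 5)) K :=
  listPfaffian (Xmat K (2 * q + 5)) (indices q s)

theorem subPfaffian_dvd_of_perm (h : s.Perm s') : subPfaffian K q s ∣ subPfaffian K q s' := by
  have hperm : (indices q s).Perm (indices q s') := (h.map _).append_right _
  rcases listPfaffian_perm (Xmat_isAlternating (K := K)) hperm with h | h
  · exact dvd_of_eq h
  · exact (dvd_of_eq h).trans (neg_dvd.mpr dvd_rfl)

theorem subPfaffian_mul_mem_of_four (a b c d : Fin 5) (hbc : subPfaffian K q (b :: c :: s) ∈ I)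
    (hbd : subPfaffian K q (b :: d :: s) ∈ I) (hcd : subPfaffian K q (c :: d :: s) ∈ I) :
    subPfaffian K q (a :: b :: c :: d :: s) * subPfaffian K q s ∈ I := by
  refine Set.mem_of_eq_of_mem (listPfaffian_plucker_four Xmat_isAlternating (a.castLE (by omega))
    (b.castLE (by omega)) (c.castLE (by omega)) (d.castLE (by omega)) (indices q s)) ?_
  exact sub_mem (add_mem (neg_mem (I.mul_mem_right _ hcd)) (I.mul_mem_right _ hbd))
    (I.mul_mem_right _ hbc)

theorem subPfaffian_mul_mem_of_five (a b c d e : Fin 5)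
    (ha : subPfaffian K q (b :: c :: d :: e :: s) ∈ I)
    (hb : subPfaffian K q (a :: c :: d :: e :: s) ∈ I) (hed : subPfaffian K q (e :: d :: s) ∈ I) :
    subPfaffian K q (c :: d :: s) * subPfaffian K q (a :: b :: d :: e :: s) ∈ I := by
  refine Set.mem_of_eq_of_mem (listPfaffian_plucker_five Xmat_isAlternating (a.castLE (by omega))
    (b.castLE (by omega)) (c.castLE (by omega)) (d.castLE (by omega)) (e.castLE (by omega))
    (indices q s)) ?_
  exact sub_mem (sub_mem (I.mul_mem_right _ hb) (I.mul_mem_right _ ha)) (I.mul_mem_right _ hed)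

theorem subPfaffian_regularIndices_mul_nil_mem (hI : ∀ i, subPfaffian K q (linkedIndices i) ∈ I)
    (i : Fin 3) : subPfaffian K q (regularIndices i) * subPfaffian K q [] ∈ I := by
  have h34 : subPfaffian K q [3, 4] ∈ I := hI 0
  have h23 : subPfaffian K q [2, 3] ∈ I := hI 1
  have h24 : subPfaffian K q [2, 4] ∈ I := hI 2
  fin_cases i
  · exact I.mul_mem_right _ h34
  · exact subPfaffian_mul_mem_of_four 1 2 3 4 h23 h24 h34
  · exact subPfaffian_mul_mem_of_four 0 2 3 4 h23 h24 h34

theorem subPfaffian_linkedIndices_mul_mem (hI : ∀ i, subPfaffian K q (regularIndices i) ∈ I)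
    (i : Fin 3) : subPfaffian K q (linkedIndices i) * subPfaffian K q [0, 1, 3, 4] ∈ I := by
  have mem_of_perm {s s' : List (Fin 5)} (h : s.Perm s') (hs : subPfaffian K q s ∈ I) :
      subPfaffian K q s' ∈ I := I.mem_of_dvd (subPfaffian_dvd_of_perm h) hs
  have h34 : subPfaffian K q [3, 4] ∈ I := hI 0
  have h1234 : subPfaffian K q [1, 2, 3, 4] ∈ I := hI 1
  have h0234 : subPfaffian K q [0, 2, 3, 4] ∈ I := hI 2
  fin_cases i
  · exact I.mul_mem_right _ h34
  · exact subPfaffian_mul_mem_of_five 0 1 2 3 4 h1234 h0234 (mem_of_perm (by decide) h34)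
  · have h0143 : subPfaffian K q [2, 4] * subPfaffian K q [0, 1, 4, 3] ∈ I :=
      subPfaffian_mul_mem_of_five 0 1 2 4 3 (mem_of_perm (by decide) h1234)
        (mem_of_perm (by decide) h0234) h34
    exact I.mem_of_dvd (mul_dvd_mul_left _ (subPfaffian_dvd_of_perm (by decide))) h0143

theorem isRegSeq_subPfaffian_regularIndices (K : Type) [Field K] (q : ℕ) :
    IsRegSeq fun i => subPfaffian K q (regularIndices i) :=
  isRegSeq_listPfaffian (isBalanced_indices_regularIndices q) (by decide)
    fun i => indices_ne_nil (by decide +revert)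

theorem isDSequence_subPfaffian_regularIndices_snoc (K : Type) [Field K] (q : ℕ) :
    IsDSequence (Fin.snoc (fun i => subPfaffian K q (regularIndices i))
      (subPfaffian K q [0, 1, 3, 4]) : Fin 4 → MvPolynomial (PairVar (2 * q + 5)) K) :=
  isDSequence_snoc_of_linked (isRegSeq_subPfaffian_regularIndices K q)
    (fun _ => mem_span_of_mul_listPfaffian_mem_span (isBalanced_indices_regularIndices q)
      (by decide) (isBalanced_indices_nil q) (by decide))
    (fun _ => mem_span_of_mul_listPfaffian_mem_span (isBalanced_indices_linkedIndices q)
      (by decide) (isBalanced_indices_zero_one_three_four q) (by decide))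
    (subPfaffian_regularIndices_mul_nil_mem fun i => Ideal.subset_span (Set.mem_range_self i))
    (subPfaffian_linkedIndices_mul_mem fun i => Ideal.subset_span (Set.mem_range_self i))

theorem pfaffian_submatrix_eq_subPfaffian {n : ℕ} {u : Fin n → Fin (2 * q + 5)}
    (h : List.ofFn u = indices q s) :
    pfaffian n ((Xmat K (2 * q + 5)).submatrix u u) = subPfaffian K q s := by
  rw [pfaffian_submatrix, h, subPfaffian]

end SubPfaffian

/-- Lemma 2.8(1): for an odd integer `t = 2q + 5 ≥ 5`, the Pfaffians
`Pf_{123̄}(X), Pf_{1̄}(X), Pf_{2̄}(X), Pf_{3̄}(X)` form a d-sequence in `K[X]` such that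
`Pf_{123̄}(X), Pf_{1̄}(X), Pf_{2̄}(X)` is a regular sequence. -/
theorem pfaffian_dSequence_odd (K : Type) [Field K] (q : ℕ) :
    letI t := 2 * q + 5
    letI B := MvPolynomial (PairVar t) K
    letI X := Xmat K t
    letI pf123 : B := pfaffian (2 * q + 2) (X.submatrix emb3 emb3)
    letI pf1 : B := pfaffian (2 * q + 4) (X.submatrix (emb1 0) (emb1 0))
    letI pf2 : B := pfaffian (2 * q + 4) (X.submatrix (emb1 1) (emb1 1))
    letI pf3 : B := pfaffian (2 * q + 4) (X.submatrix (emb1 2) (emb1 2))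
    IsDSequence ![pf123, pf1, pf2, pf3] ∧ IsRegSeq ![pf123, pf1, pf2] := by
  have h123 : List.ofFn (emb3 (n := 2 * q + 2)) = indices q [3, 4] := by
    rw [List.ofFn_succ, List.ofFn_succ]; rfl
  have h1 : List.ofFn (emb1 0 (n := 2 * q + 4)) = indices q [1, 2, 3, 4] := by
    simp only [List.ofFn_succ]; rfl
  have h2 : List.ofFn (emb1 1 (n := 2 * q + 4)) = indices q [0, 2, 3, 4] := by
    simp only [List.ofFn_succ]; rfl
  have h3 : List.ofFn (emb1 2 (n := 2 * q + 4)) = indices q [0, 1, 3, 4] := by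
    simp only [List.ofFn_succ]; rfl
  rw [pfaffian_submatrix_eq_subPfaffian h123, pfaffian_submatrix_eq_subPfaffian h1,
    pfaffian_submatrix_eq_subPfaffian h2, pfaffian_submatrix_eq_subPfaffian h3]
  constructor
  · convert isDSequence_subPfaffian_regularIndices_snoc K q using 1
    ext1 i
    fin_cases i <;> rfl
  · convert isRegSeq_subPfaffian_regularIndices K q using 1
    ext1 i
    fin_cases i <;> rfl
end
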